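/- Let Y ⊂ P^n be an irreducible projective variety of dimension e and degree d, Λ a linear form not vanishing identically on Y, and Y_aff = Y \ V(Λ) the corresponding affine variety in C^n = C^{n_1} × C^{n_2} for a splitting n = n_1 + n_2. Let Y_· be the closure of Y_aff in P^{n_1} × P^{n_2}. Then Y_· and Y_aff are irreducible of dimension e, and for any (e_1,e_2) with e_1 + e_2 = e, the (e_1,e_2)-multidegree of Y_· is at most d. -/

import Mathlib

/-!
Let `z` be the generic point of `Y_aff`, with coordinates in the field of fractions `K` of its
coordinate ring. All dimensions are the transcendence degree of `K`, and all degrees are field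
degrees, in the following way.

Consider the generic linear slice through `z`: the coefficients of its linear forms are independent
variables `P`, and the constant terms are chosen so that the slice passes through `z`. If the number
of linear forms is `trdeg K` and the resulting parameters `t` are algebraically independent, they
are a transcendence basis of `K(P)`, and a general slice meets the variety in
`D = [ℂ(t, z) : ℂ(t)]` points, the roots of a specialized minimal polynomial (`core_fiber`,
`generic_fiber`, `sys_det`). The number `D` is also the largest number of polynomials in `z` that
are linearly independent over `ℂ[t]`. With more forms, a general slice is empty (`sys_overdet`);
with fewer, it is empty or infinite (`sys_underdet`).

The closure in multiprojective space is handled in the standard charts, in each of which it is again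
the variety of a generic point (`Par.ch_mem_iff`). A general slice of complementary dimension
meets the closure inside any one chart that contains the generic point (`Par.generic_chart`). This
gives the dimension statements (`Par.dimOf_eq`, `affDimIs_VZ`). Irreducibility is transported along
charts (`affine_part`, `Par.isIrredVariety_closure`).

For the bound on the multidegree `δ`, take `δ` polynomials independent over the parameters of a
slice whose forms involve only one of the two blocks of variables (`Par.exists_ind`). Such forms are
specializations of arbitrary linear forms on `ℂ^{n₁+n₂}`, and linear independence survives the
passage from special to generic coefficients (`ind_specialize`): a relation over generic
coefficients, restricted to a line through the special ones, could be divided by the parameter of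
the line until it restricts to a nonzero relation over the special coefficients. Hence `δ ≤ D`,
where `D` is the number of points of `Y_aff` on a general linear slice. These points lie on a general
linear section of `Y`, which has `d` points, so `D ≤ d` (`le_degree`).
-/

open scoped BigOperators

namespace MultiProj

variable {ι : Type*} [Fintype ι] [DecidableEq ι]

/-- Multiprojective space: a product of complex projective spaces `ℙ^{n i}`. -/
abbrev PStack (n : ι → ℕ) := (i : ι) → Projectivization ℂ (Fin (n i + 1) → ℂ)

/-- A linear form (given by its coefficient vector) vanishes at a point of the
projectivization of a coordinate space. -/
def PLinVanish {κ : Type*} [Fintype κ] (c : κ → ℂ)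
    (p : Projectivization ℂ (κ → ℂ)) : Prop :=
  ∀ (v : κ → ℂ) (hv : v ≠ 0), Projectivization.mk ℂ v hv = p → ∑ a, c a * v a = 0

/-- A polynomial in the multihomogeneous coordinates vanishes at a point of the
multiprojective space, i.e. at every system of homogeneous representatives. -/
def PolyVanish {n : ι → ℕ} (f : MvPolynomial ((i : ι) × Fin (n i + 1)) ℂ)
    (x : PStack n) : Prop :=
  ∀ v : (i : ι) → Fin (n i + 1) → ℂ,
    (∀ i, ∃ hv : v i ≠ 0, Projectivization.mk ℂ (v i) hv = x i) →
    MvPolynomial.eval (fun p => v p.1 p.2) f = 0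

/-- Algebraic subsets of multiprojective space. -/
def IsAlgebraicSet {n : ι → ℕ} (X : Set (PStack n)) : Prop :=
  ∃ F : Set (MvPolynomial ((i : ι) × Fin (n i + 1)) ℂ),
    X = {x | ∀ f ∈ F, PolyVanish f x}

/-- Irreducible multiprojective varieties: nonempty algebraic sets that are not
contained in the union of two algebraic sets without being contained in one. -/
def IsIrredVariety {n : ι → ℕ} (X : Set (PStack n)) : Prop :=
  IsAlgebraicSet X ∧ X.Nonempty ∧
    ∀ A B : Set (PStack n), IsAlgebraicSet A → IsAlgebraicSet B →
      X ⊆ A ∪ B → (X ⊆ A ∨ X ⊆ B)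

/-- An irreducible component of a multiprojective variety. -/
def IsComponentOf {n : ι → ℕ} (Y X : Set (PStack n)) : Prop :=
  IsIrredVariety Y ∧ Y ⊆ X ∧
    ∀ Y' : Set (PStack n), IsIrredVariety Y' → Y ⊆ Y' → Y' ⊆ X → Y' = Y

/-- Parameter space for a multilinear slice of type `e`: `e i` linear forms in
the variables of the `i`-th factor. -/
abbrev SliceParams (n : ι → ℕ) (e : ι → ℕ) :=
  (i : ι) → Fin (e i) → (Fin (n i + 1) → ℂ)

/-- The common zero set in multiprojective space of a multilinear slice. -/
def SliceZeros {n : ι → ℕ} {e : ι → ℕ} (L : SliceParams n e) : Set (PStack n) :=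
  {x | ∀ (i : ι) (j : Fin (e i)), PLinVanish (L i j) (x i)}

/-- A property holds generically (on a dense open set) of a parameter. -/
def Generic {α : Type*} [TopologicalSpace α] (P : α → Prop) : Prop :=
  ∃ U : Set α, IsOpen U ∧ Dense U ∧ ∀ a ∈ U, P a

/-- The multidimension `Dim(X)`: the set of vectors `e` such that a general
multilinear slice of type `e` meets `X` in finitely many, and at least one, points. -/
def MDim {n : ι → ℕ} (X : Set (PStack n)) : Set (ι → ℕ) :=
  {e | (∀ i, e i ≤ n i) ∧
    Generic (fun L : SliceParams n e =>
      (X ∩ SliceZeros L).Finite ∧ (X ∩ SliceZeros L).Nonempty)}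

/-- `Deg_X(e) = d`: a general multilinear slice of type `e` meets `X` in exactly
`d` points. -/
def DegIs {n : ι → ℕ} (X : Set (PStack n)) (e : ι → ℕ) (d : ℕ) : Prop :=
  Generic (fun L : SliceParams n e =>
    (X ∩ SliceZeros L).Finite ∧ (X ∩ SliceZeros L).ncard = d)

/-- The intrinsic dimension of a multiprojective variety, read off as the common
total degree of the vectors in its multidimension. -/
noncomputable def dimOf {n : ι → ℕ} (X : Set (PStack n)) : ℕ :=
  sSup {m | ∃ e ∈ MDim X, ∑ i, e i = m}

/-- Projection of the multiprojective space onto the factors indexed by `I`. -/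
def resMap {n : ι → ℕ} (I : Finset ι) (x : PStack n) :
    PStack (fun i : {j // j ∈ I} => n i.1) :=
  fun i => x i.1

/-- `dim π_I(X)`: the dimension of the projection of `X` onto the factors
indexed by `I`. -/
noncomputable def dimProj {n : ι → ℕ} (I : Finset ι) (X : Set (PStack n)) : ℕ :=
  dimOf (resMap I '' X)

/-- An equidimensional multiprojective variety: all irreducible components have
the same multidimension. -/
def Equidimensional {n : ι → ℕ} (X : Set (PStack n)) : Prop :=
  IsAlgebraicSet X ∧ X.Nonempty ∧
    ∀ Y Y' : Set (PStack n), IsComponentOf Y X → IsComponentOf Y' X →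
      MDim Y = MDim Y'

/-- The set of lattice points of a polymatroid polytope inside the box `[n]`,
cut out by a submodular, monotone rank function. -/
def IsPolymatroidSet (n : ι → ℕ) (P : Set (ι → ℕ)) : Prop :=
  ∃ r : Finset ι → ℕ,
    (∀ A B : Finset ι, r (A ∪ B) + r (A ∩ B) ≤ r A + r B) ∧
    (∀ A B : Finset ι, A ⊆ B → r A ≤ r B) ∧
    P = {e | (∀ i, e i ≤ n i) ∧ (∑ i, e i = r Finset.univ) ∧
          ∀ S : Finset ι, ∑ i ∈ S, e i ≤ r S}

section Product

variable {ι₁ ι₂ : Type*} [Fintype ι₁] [DecidableEq ι₁] [Fintype ι₂] [DecidableEq ι₂]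

/-- Combine points of two multiprojective spaces into a point of the product
multiprojective space, indexed by the disjoint union of the index sets. -/
def combine {n₁ : ι₁ → ℕ} {n₂ : ι₂ → ℕ} (y : PStack n₁) (z : PStack n₂) :
    PStack (Sum.elim n₁ n₂) := fun i =>
  match i with
  | Sum.inl a => y a
  | Sum.inr b => z b

/-- The Cartesian product of multiprojective varieties in disjoint factors. -/
def prodSet {n₁ : ι₁ → ℕ} {n₂ : ι₂ → ℕ} (Y : Set (PStack n₁)) (Z : Set (PStack n₂)) :
    Set (PStack (Sum.elim n₁ n₂)) :=
  {x | ∃ y ∈ Y, ∃ z ∈ Z, x = combine y z}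

/-- Projection of the product multiprojective space onto the first group of factors. -/
def projL {n₁ : ι₁ → ℕ} {n₂ : ι₂ → ℕ} (x : PStack (Sum.elim n₁ n₂)) : PStack n₁ :=
  fun a => x (Sum.inl a)

/-- Projection of the product multiprojective space onto the second group of factors. -/
def projR {n₁ : ι₁ → ℕ} {n₂ : ι₂ → ℕ} (x : PStack (Sum.elim n₁ n₂)) : PStack n₂ :=
  fun b => x (Sum.inr b)

end Product

section Segre

/-- Degree `δ` of a subset `S` of the projective space `ℙ(ℂ^κ)` of dimension `d`:
a general collection of `d` hyperplanes meets `S` in exactly `δ` points. -/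
def ProjDegIs {κ : Type*} [Fintype κ] (S : Set (Projectivization ℂ (κ → ℂ)))
    (d : ℕ) (δ : ℕ) : Prop :=
  Generic (fun c : Fin d → κ → ℂ =>
    (S ∩ {p | ∀ j, PLinVanish (c j) p}).Finite ∧
    (S ∩ {p | ∀ j, PLinVanish (c j) p}).ncard = δ)

/-- `σ` is a Segre embedding: on homogeneous representatives it is given by the
tensor (outer) product of the coordinate vectors of the factors. -/
def IsSegreMap (n : ι → ℕ)
    (σ : PStack n → Projectivization ℂ (((i : ι) → Fin (n i + 1)) → ℂ)) : Prop :=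
  ∀ (x : PStack n) (v : (i : ι) → Fin (n i + 1) → ℂ),
    (∀ i, ∃ hv : v i ≠ 0, Projectivization.mk ℂ (v i) hv = x i) →
    ∃ h : (fun a : (i : ι) → Fin (n i + 1) => ∏ i, v i (a i)) ≠ 0,
      Projectivization.mk ℂ (fun a : (i : ι) → Fin (n i + 1) => ∏ i, v i (a i)) h = σ x

end Segre

end MultiProj

open MultiProj

namespace MultiProj

/-- Algebraic subsets of affine space `ℂ^m`. -/
def AffAlgebraic {m : ℕ} (S : Set (Fin m → ℂ)) : Prop :=
  ∃ F : Set (MvPolynomial (Fin m) ℂ), S = {x | ∀ f ∈ F, MvPolynomial.eval x f = 0}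

/-- Irreducibility for (constructible) subsets of affine space: `S` is nonempty and
is not covered by two algebraic sets without being contained in one of them. -/
def AffIrred {m : ℕ} (S : Set (Fin m → ℂ)) : Prop :=
  S.Nonempty ∧ ∀ A B : Set (Fin m → ℂ), AffAlgebraic A → AffAlgebraic B →
    S ⊆ A ∪ B → (S ⊆ A ∨ S ⊆ B)

/-- `S ⊆ ℂ^m` has dimension `e`: a general affine-linear slice of codimension `e`
meets `S` in finitely many, and at least one, points. -/
def AffDimIs {m : ℕ} (S : Set (Fin m → ℂ)) (e : ℕ) : Prop :=
  Generic (fun L : Fin e → ((Fin m → ℂ) × ℂ) =>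
    (S ∩ {x | ∀ j, ∑ a, (L j).1 a * x a + (L j).2 = 0}).Finite ∧
    (S ∩ {x | ∀ j, ∑ a, (L j).1 a * x a + (L j).2 = 0}).Nonempty)

/-- The multiprojective (Zariski) closure of a subset of multiprojective space:
the intersection of all algebraic sets containing it. -/
def mpClosure {ι : Type*} [Fintype ι] [DecidableEq ι] {n : ι → ℕ}
    (S : Set (PStack n)) : Set (PStack n) :=
  ⋂₀ {A | IsAlgebraicSet A ∧ S ⊆ A}

/-! ### Nonvanishing loci and denominators -/

/-- The nonvanishing locus of a nonzero polynomial is open and dense in the complex topology; this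
is what turns polynomial conditions on the parameters into `Generic` statements. -/
theorem isOpen_dense_eval_ne_zero {σ : Type} [Finite σ] (g : MvPolynomial σ ℂ) (hg : g ≠ 0) :
    IsOpen {p : σ → ℂ | MvPolynomial.eval p g ≠ 0} ∧
      Dense {p : σ → ℂ | MvPolynomial.eval p g ≠ 0} := by
  have := Fintype.ofFinite σ
  have hc : Continuous fun p : σ → ℂ => MvPolynomial.eval p g := MvPolynomial.continuous_eval g
  refine ⟨isOpen_ne_fun hc continuous_const, ?_⟩
  obtain ⟨q, hq⟩ : ∃ q, MvPolynomial.eval q g ≠ 0 := by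
    by_contra! h
    exact hg (MvPolynomial.funext (by simpa using h))
  intro p
  -- restrict `g` to the line through `p` and a point `q` where it does not vanish
  let G : Polynomial ℂ :=
    MvPolynomial.aeval (fun i => Polynomial.C (p i) + Polynomial.X * Polynomial.C (q i - p i)) g
  have hG : ∀ s : ℂ, G.eval s = MvPolynomial.eval (fun i => p i + s * (q i - p i)) g := by
    intro s
    have : (Polynomial.aeval s).comp (MvPolynomial.aeval (fun i => Polynomial.C (p i) + Polynomial.X * Polynomial.C (q i - p i)))
       = MvPolynomial.aeval (R := ℂ) (fun i => p i + s * (q i - p i)) := by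
      ext i; simp
    have := congrArg (fun f => f g) this
    simpa [G, MvPolynomial.aeval_eq_eval] using this
  have hG0 : G ≠ 0 := by
    intro h
    have := hG 1
    simp [h] at this
    exact hq this.symm
  have hfin : {s : ℂ | G.eval s = 0}.Finite := by
    refine (G.roots.toFinset.finite_toSet).subset ?_
    intro s hs
    simpa [hG0] using hs
  have hd : Dense {s : ℂ | G.eval s = 0}ᶜ := hfin.countable.dense_compl ℂ
  have hcont : Continuous fun s : ℂ => (fun i => p i + s * (q i - p i)) := by fun_prop
  have h0 := hd 0
  have := map_mem_closure hcont h0 (t := {p : σ → ℂ | MvPolynomial.eval p g ≠ 0})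
    (fun s hs => by simpa [← hG] using hs)
  simpa using this

/-- Clearing denominators in `f(num / den)`. The element `F` does not depend on the ring in which
the quotients `w k` live: in every ring where `den * w k = num k`, it becomes `den ^ N * f(w)`. -/
theorem exists_homogenization {κ 𝒜 : Type} [CommRing 𝒜] [Algebra ℂ 𝒜]
    (f : MvPolynomial κ ℂ) (den : 𝒜) (num : κ → 𝒜) :
    ∃ (N : ℕ) (F : 𝒜), ∀ (E : Type) [CommRing E] [Algebra ℂ E] (χ : 𝒜 →ₐ[ℂ] E) (w : κ → E),
      (∀ k, χ den * w k = χ (num k)) → χ F = χ den ^ N * MvPolynomial.aeval w f := by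
  induction f using MvPolynomial.induction_on with
  | C a =>
    refine ⟨0, algebraMap ℂ 𝒜 a, ?_⟩
    intro E _ _ χ w hw
    simp
  | add p q hp hq =>
    obtain ⟨N, F, hF⟩ := hp
    obtain ⟨M, G, hG⟩ := hq
    refine ⟨N + M, den ^ M * F + den ^ N * G, ?_⟩
    intro E _ _ χ w hw
    simp only [map_add, map_mul, map_pow, hF E χ w hw, hG E χ w hw]
    ring
  | mul_X p k hp =>
    obtain ⟨N, F, hF⟩ := hp
    refine ⟨N + 1, F * num k, ?_⟩
    intro E _ _ χ w hw
    simp only [map_mul, hF E χ w hw, ← hw k, MvPolynomial.aeval_X]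
    ring

/-! ### Primitive elements and their minimal polynomials -/

/-- The fibre over `p` of the closure of the point `(t, u)`: all `q` such that every polynomial
relation between `t` and `u` holds at `(p, q)`. -/
def FiberPts {σ τ B : Type} [CommRing B] [Algebra ℂ B] (t : σ → B) (u : τ → B) (p : σ → ℂ) :
    Set (τ → ℂ) :=
  {q | ∀ f : MvPolynomial (σ ⊕ τ) ℂ, MvPolynomial.aeval (Sum.elim t u) f = 0 →
    MvPolynomial.eval (Sum.elim p q) f = 0}

/-- The polynomials `Θ i` in `u` are linearly independent over the polynomials in `t`. The
coefficients `q i` are formal polynomials, so for a nonempty family this also forces `t` to be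
algebraically independent. -/
def Ind {σ τ B : Type} [CommRing B] [Algebra ℂ B] (t : σ → B) (u : τ → B) {m : ℕ}
    (Θ : Fin m → MvPolynomial τ ℂ) : Prop :=
  ∀ q : Fin m → MvPolynomial σ ℂ,
    ∑ i, MvPolynomial.aeval t (q i) * MvPolynomial.aeval u (Θ i) = 0 → ∀ i, q i = 0

section Core
open MvPolynomial

variable {σ τ L : Type} [Field L] [Algebra ℂ L]
  [Algebra (MvPolynomial σ ℂ) L] [IsScalarTower ℂ (MvPolynomial σ ℂ) L]
  [FaithfulSMul (MvPolynomial σ ℂ) L]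
  [Algebra (FractionRing (MvPolynomial σ ℂ)) L]
  [IsScalarTower (MvPolynomial σ ℂ) (FractionRing (MvPolynomial σ ℂ)) L]

/-- After clearing a denominator in `ℂ[t]`, every element of `ℂ(t)[u]` is a polynomial in `t` and `u`. -/
theorem core_clear (u : τ → L)
    (hspan : Algebra.adjoin (FractionRing (MvPolynomial σ ℂ)) (Set.range u) = ⊤) (x : L) :
    ∃ r : MvPolynomial σ ℂ, r ≠ 0 ∧ ∃ f : MvPolynomial (σ ⊕ τ) ℂ,
      algebraMap _ L r * x =
        aeval (Sum.elim (fun i => algebraMap (MvPolynomial σ ℂ) L (X i)) u) f := by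
  have hR : ∀ r : MvPolynomial σ ℂ,
      aeval (Sum.elim (fun i => algebraMap (MvPolynomial σ ℂ) L (X i)) u)
        (rename Sum.inl r) = algebraMap _ L r := by
    intro r
    rw [aeval_rename]
    have : (aeval (Sum.elim (fun i => algebraMap (MvPolynomial σ ℂ) L (X i)) u ∘ Sum.inl)) =
      IsScalarTower.toAlgHom ℂ (MvPolynomial σ ℂ) L := by
      ext i; simp
    rw [this]; rfl
  have hx : x ∈ Algebra.adjoin (FractionRing (MvPolynomial σ ℂ)) (Set.range u) := by
    rw [hspan]; trivial
  induction hx using Algebra.adjoin_induction with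
  | mem x hx =>
    obtain ⟨k, rfl⟩ := hx
    exact ⟨1, one_ne_zero, X (Sum.inr k), by simp⟩
  | algebraMap r =>
    obtain ⟨⟨a, b⟩, hab⟩ := IsLocalization.surj (nonZeroDivisors (MvPolynomial σ ℂ)) r
    refine ⟨b, nonZeroDivisors.coe_ne_zero b, rename Sum.inl a, ?_⟩
    rw [hR, IsScalarTower.algebraMap_apply (MvPolynomial σ ℂ) (FractionRing (MvPolynomial σ ℂ)) L,
      ← map_mul, mul_comm, hab, ← IsScalarTower.algebraMap_apply]
  | add x y _ _ hx hy =>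
    obtain ⟨r, hr, f, hf⟩ := hx
    obtain ⟨s, hs, g, hg⟩ := hy
    refine ⟨r * s, mul_ne_zero hr hs, rename Sum.inl s * f + rename Sum.inl r * g, ?_⟩
    simp only [map_add, map_mul, hR, ← hf, ← hg]; ring
  | mul x y _ _ hx hy =>
    obtain ⟨r, hr, f, hf⟩ := hx
    obtain ⟨s, hs, g, hg⟩ := hy
    refine ⟨r * s, mul_ne_zero hr hs, f * g, ?_⟩
    simp only [map_mul, ← hf, ← hg]; ring

variable [FiniteDimensional (FractionRing (MvPolynomial σ ℂ)) L]

/-- A primitive element that is integral over `ℂ[t]` and a polynomial in `t` and `u`. -/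
theorem core_primitive (u : τ → L)
    (hspan : Algebra.adjoin (FractionRing (MvPolynomial σ ℂ)) (Set.range u) = ⊤) :
    ∃ θ : L, IsIntegral (MvPolynomial σ ℂ) θ ∧
      IntermediateField.adjoin (FractionRing (MvPolynomial σ ℂ)) {θ} = ⊤ ∧
      ∃ f : MvPolynomial (σ ⊕ τ) ℂ,
        θ = aeval (Sum.elim (fun i => algebraMap (MvPolynomial σ ℂ) L (X i)) u) f := by
  let R := MvPolynomial σ ℂ
  let F := FractionRing R
  have : CharZero F := charZero_of_injective_algebraMap (algebraMap ℂ F).injective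
  obtain ⟨θ₀, hθ₀⟩ := Field.exists_primitive_element F L
  obtain ⟨r, hr, f, hf⟩ := core_clear u hspan θ₀
  have halg : IsAlgebraic R (algebraMap R L r * θ₀) := by
    have : Algebra.IsAlgebraic F L := inferInstance
    have : Algebra.IsAlgebraic R L := (IsFractionRing.comap_isAlgebraic_iff (A := R) (K := F)).mpr this
    exact Algebra.IsAlgebraic.isAlgebraic _
  obtain ⟨y, hy, hint⟩ := halg.exists_integral_multiple
  refine ⟨_, hint, ?_, rename Sum.inl y * f, ?_⟩
  · rw [eq_top_iff, ← hθ₀, IntermediateField.adjoin_simple_le_iff]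
    have h1 := IntermediateField.mem_adjoin_simple_self F (y • (algebraMap R L r * θ₀))
    have h2 : θ₀ = (algebraMap F L (algebraMap R F (y * r)))⁻¹ * (y • (algebraMap R L r * θ₀)) := by
      rw [← IsScalarTower.algebraMap_apply, Algebra.smul_def, ← mul_assoc (algebraMap R L y),
        ← map_mul, ← mul_assoc, inv_mul_cancel₀, one_mul]
      intro h
      exact mul_ne_zero hy hr ((FaithfulSMul.algebraMap_injective R L) (by rw [h, map_zero]))
    have h3 := mul_mem (inv_mem (IntermediateField.algebraMap_mem _ (algebraMap R F (y * r)))) h1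
    rwa [← h2] at h3
  · rw [Algebra.smul_def, hf, map_mul, aeval_rename]
    congr 1
    have : (aeval (Sum.elim (fun i => algebraMap (MvPolynomial σ ℂ) L (X i)) u ∘ Sum.inl)) =
      IsScalarTower.toAlgHom ℂ (MvPolynomial σ ℂ) L := by
      ext i; simp
    rw [this]; rfl

/-- After clearing a denominator in `ℂ[t]`, every element is a polynomial in the primitive element. -/
theorem core_poly (θ : L)
    (hθ : IntermediateField.adjoin (FractionRing (MvPolynomial σ ℂ)) {θ} = ⊤) (x : L) :
    ∃ r : MvPolynomial σ ℂ, r ≠ 0 ∧ ∃ q : Polynomial (MvPolynomial σ ℂ),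
      algebraMap _ L r * x = Polynomial.aeval θ q := by
  let R := MvPolynomial σ ℂ
  let F := FractionRing R
  have hx : x ∈ Algebra.adjoin F {θ} := by
    rw [(IntermediateField.adjoin_simple_eq_top_iff_of_isAlgebraic
      (Algebra.IsAlgebraic.isAlgebraic θ)).1 hθ]; trivial
  rw [Algebra.adjoin_singleton_eq_range_aeval] at hx
  obtain ⟨p, rfl⟩ := hx
  obtain ⟨b, hb, hbp⟩ := IsLocalization.integerNormalization_spec (nonZeroDivisors R) p
  refine ⟨b, nonZeroDivisors.ne_zero hb, IsLocalization.integerNormalization (nonZeroDivisors R) p, ?_⟩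
  rw [← Polynomial.aeval_map_algebraMap F, hbp, ← algebraMap_smul F b p, map_smul, Algebra.smul_def,
    ← IsScalarTower.algebraMap_apply]
  rfl

/-- The minimal polynomial of an integral primitive element has coefficients in `ℂ[t]` and divides
all polynomials over `ℂ[t]` that kill `θ`. It has degree `[L : ℂ(t)]`, and clearing denominators in
its separability gives a Bézout identity with nonzero right-hand side `c`, so it stays separable
wherever `c` does not vanish. -/
theorem core_minpoly (θ : L) (hint : IsIntegral (MvPolynomial σ ℂ) θ)
    (hθ : IntermediateField.adjoin (FractionRing (MvPolynomial σ ℂ)) {θ} = ⊤) :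
    ∃ P : Polynomial (MvPolynomial σ ℂ), P.Monic ∧
      P.natDegree = Module.finrank (FractionRing (MvPolynomial σ ℂ)) L ∧
      Polynomial.aeval θ P = 0 ∧
      (∀ H : Polynomial (MvPolynomial σ ℂ), Polynomial.aeval θ H = 0 → P ∣ H) ∧
      ∃ c : MvPolynomial σ ℂ, c ≠ 0 ∧ ∃ U V : Polynomial (MvPolynomial σ ℂ),
        U * P + V * Polynomial.derivative P = Polynomial.C c := by
  let R := MvPolynomial σ ℂ
  let F := FractionRing R
  have : CharZero F := charZero_of_injective_algebraMap (algebraMap ℂ F).injective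
  have hmin : minpoly F θ = (minpoly R θ).map (algebraMap R F) :=
    minpoly.isIntegrallyClosed_eq_field_fractions' F hint
  have hmon := minpoly.monic hint
  refine ⟨minpoly R θ, hmon, ?_, minpoly.aeval _ _,
    fun H hH => minpoly.isIntegrallyClosed_dvd hint hH, ?_⟩
  · have h1 := IntermediateField.adjoin.finrank (K := F) (x := θ) (Algebra.IsIntegral.isIntegral θ)
    rw [hθ, hmin, hmon.natDegree_map, IntermediateField.finrank_top'] at h1
    exact h1.symm
  · have hsep : (minpoly F θ).Separable :=
      (minpoly.irreducible (Algebra.IsIntegral.isIntegral θ)).separable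
    obtain ⟨U, V, hUV⟩ := hsep
    rw [hmin] at hUV
    obtain ⟨b, hb, hbp⟩ := IsLocalization.integerNormalization_spec (nonZeroDivisors R) U
    obtain ⟨c, hc, hcp⟩ := IsLocalization.integerNormalization_spec (nonZeroDivisors R) V
    refine ⟨b * c, mul_ne_zero (nonZeroDivisors.ne_zero hb) (nonZeroDivisors.ne_zero hc),
      Polynomial.C c * IsLocalization.integerNormalization (nonZeroDivisors R) U,
      Polynomial.C b * IsLocalization.integerNormalization (nonZeroDivisors R) V, ?_⟩
    apply Polynomial.map_injective (algebraMap R F) (IsFractionRing.injective R F)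
    rw [Polynomial.derivative_map] at hUV
    simp only [Polynomial.map_add, Polynomial.map_mul, hbp, hcp, Polynomial.map_C, map_mul]
    rw [← algebraMap_smul F b U, ← algebraMap_smul F c V, Polynomial.smul_eq_C_mul,
      Polynomial.smul_eq_C_mul]
    linear_combination (Polynomial.C (algebraMap R F b) * Polynomial.C (algebraMap R F c)) * hUV

end Core

/-! ### Points of a general fibre -/

section Core
open MvPolynomial

/-- The general fibre over parameter space has `[L : ℂ(t)]` points: away from the bad locus, its
points correspond to the roots of the specialized minimal polynomial of a primitive element. -/
theorem core_fiber {σ τ L : Type} [Finite τ] [Field L] [Algebra ℂ L]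
    [Algebra (MvPolynomial σ ℂ) L] [IsScalarTower ℂ (MvPolynomial σ ℂ) L]
    [FaithfulSMul (MvPolynomial σ ℂ) L]
    [Algebra (FractionRing (MvPolynomial σ ℂ)) L]
    [IsScalarTower (MvPolynomial σ ℂ) (FractionRing (MvPolynomial σ ℂ)) L]
    [FiniteDimensional (FractionRing (MvPolynomial σ ℂ)) L] (u : τ → L)
    (hspan : Algebra.adjoin (FractionRing (MvPolynomial σ ℂ)) (Set.range u) = ⊤) :
    ∃ g : MvPolynomial σ ℂ, g ≠ 0 ∧ ∀ p, eval p g ≠ 0 →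
      (FiberPts (fun i => algebraMap (MvPolynomial σ ℂ) L (X i)) u p).Finite ∧
      (FiberPts (fun i => algebraMap (MvPolynomial σ ℂ) L (X i)) u p).ncard =
        Module.finrank (FractionRing (MvPolynomial σ ℂ)) L := by
  classical
  have := Fintype.ofFinite τ
  obtain ⟨θ, hint, hθ, fθ, hfθ⟩ := core_primitive u hspan
  obtain ⟨P, hPm, hPd, hP0, hPdvd, c, hc, U, V, hUV⟩ := core_minpoly θ hint hθ
  set t : σ → L := fun i => algebraMap (MvPolynomial σ ℂ) L (X i) with ht
  choose r hr q hq using fun k => core_poly θ hθ (u k)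
  set h : MvPolynomial σ ℂ := ∏ k, r k with hh
  have hQ : ∀ k, ∃ Q : Polynomial (MvPolynomial σ ℂ),
      Polynomial.aeval θ Q = algebraMap _ L h * u k := by
    intro k
    obtain ⟨s, hs⟩ := Finset.dvd_prod_of_mem r (Finset.mem_univ k)
    refine ⟨Polynomial.C s * q k, ?_⟩
    rw [map_mul, ← hq, hh, hs, Polynomial.aeval_C, map_mul]; ring
  choose Q hQ using hQ
  have hh0 : h ≠ 0 := Finset.prod_ne_zero_iff.2 fun k _ => hr k
  refine ⟨h * c, mul_ne_zero hh0 hc, fun p hp => ?_⟩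
  rw [map_mul] at hp
  have hhp : eval p h ≠ 0 := left_ne_zero_of_mul hp
  have hcp : eval p c ≠ 0 := right_ne_zero_of_mul hp
  let ev : ℂ → Polynomial (MvPolynomial σ ℂ) →ₐ[ℂ] ℂ := fun x =>
    Polynomial.eval₂AlgHom (aeval p) x (fun _ => Commute.all _ _)
  have evC : ∀ x a, ev x (Polynomial.C a) = eval p a := by
    intro x a; simp [ev, MvPolynomial.aeval_eq_eval]
  have evX : ∀ x, ev x Polynomial.X = x := by
    intro x; simp [ev]
  have evm : ∀ x H, ev x H = (H.map (eval p)).eval x := by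
    intro x H
    rw [Polynomial.eval_map]; simp [ev, MvPolynomial.aeval_eq_eval]
  let pt : ℂ → τ → ℂ := fun x k => ev x (Q k) / eval p h
  -- at a root of the specialized minimal polynomial, identities in `L` specialize
  have key : ∀ x, ev x P = 0 → ∀ (f : MvPolynomial (σ ⊕ τ) ℂ) (H : Polynomial (MvPolynomial σ ℂ)),
      aeval (Sum.elim t u) f = Polynomial.aeval θ H →
        eval (Sum.elim p (pt x)) f = ev x H := by
    intro x hx f H hfH
    obtain ⟨N, F, hF⟩ := exists_homogenization (𝒜 := Polynomial (MvPolynomial σ ℂ)) f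
      (Polynomial.C h) (Sum.elim (fun s => Polynomial.C (h * X s)) Q)
    have h1 := hF L ((Polynomial.aeval θ).restrictScalars ℂ) (Sum.elim t u) (by
      rintro (s | k)
      · simp [ht]
      · simp [hQ])
    have h2 := hF ℂ (ev x) (Sum.elim p (pt x)) (by
      rintro (s | k)
      · simp [evC]
      · simp only [evC, Sum.elim_inr, pt]
        field_simp)
    obtain ⟨W, hW⟩ := hPdvd (F - Polynomial.C h ^ N * H) (by
      simp only [AlgHom.coe_restrictScalars'] at h1
      rw [map_sub, h1, map_mul, hfH, map_pow, sub_self])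
    have h3 := congrArg (ev x) hW
    rw [map_sub, map_mul, map_mul, hx, zero_mul, h2, map_pow, ← mul_sub, evC] at h3
    have h4 := (mul_eq_zero.1 h3).resolve_left (pow_ne_zero _ hhp)
    rw [MvPolynomial.aeval_eq_eval] at h4
    exact sub_eq_zero.1 h4
  -- a fibre point `y` gives the root `fθ(p, y)`, and a root `x` gives back the point `pt x`
  have hset : FiberPts t u p = pt '' {x | ev x P = 0} := by
    ext y
    constructor
    · intro hy
      have hH : ∀ H : Polynomial (MvPolynomial σ ℂ), ∃ G : MvPolynomial (σ ⊕ τ) ℂ,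
          aeval (Sum.elim t u) G = Polynomial.aeval θ H ∧
          eval (Sum.elim p y) G = ev (eval (Sum.elim p y) fθ) H := by
        intro H
        refine ⟨Polynomial.eval₂AlgHom (rename Sum.inl) fθ (fun _ => Commute.all _ _) H, ?_, ?_⟩
        · have : (aeval (Sum.elim t u)).comp
            (Polynomial.eval₂AlgHom (rename Sum.inl) fθ (fun _ => Commute.all _ _)) =
              (Polynomial.aeval θ).restrictScalars ℂ := by
            apply Polynomial.algHom_ext'
            · ext i; simp [ht, Polynomial.CAlgHom]
            · simp [hfθ]
          exact congrArg (fun φ => φ H) this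
        · have : (aeval (Sum.elim p y)).comp
            (Polynomial.eval₂AlgHom (rename Sum.inl) fθ (fun _ => Commute.all _ _)) =
              ev (eval (Sum.elim p y) fθ) := by
            apply Polynomial.algHom_ext'
            · ext i; simp [ev, Polynomial.CAlgHom]
            · simp [ev, MvPolynomial.aeval_eq_eval]
          have := congrArg (fun φ => φ H) this
          simpa [MvPolynomial.aeval_eq_eval] using this
      refine ⟨eval (Sum.elim p y) fθ, ?_, ?_⟩
      · obtain ⟨G, hG1, hG2⟩ := hH P
        rw [Set.mem_ofPred_eq, ← hG2]
        exact hy G (by rw [hG1, hP0])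
      · funext k
        obtain ⟨G, hG1, hG2⟩ := hH (Q k)
        have := hy (G - rename Sum.inl h * X (Sum.inr k)) (by
          rw [map_sub, hG1, hQ, map_mul, aeval_rename, aeval_X, Sum.elim_comp_inl, Sum.elim_inr]
          have : (aeval t) = IsScalarTower.toAlgHom ℂ (MvPolynomial σ ℂ) L := by
            ext i; simp [ht]
          rw [this]; simp)
        rw [map_sub, hG2, map_mul, eval_rename, eval_X, Sum.elim_comp_inl, Sum.elim_inr] at this
        simp only [pt]
        rw [div_eq_iff hhp]
        linear_combination this
    · rintro ⟨x, hx, rfl⟩ f hf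
      rw [key x hx f 0 (by rw [hf, map_zero]), map_zero]
  -- `fθ` recovers the root `x` from the point `pt x`
  have hinj : Set.InjOn pt {x | ev x P = 0} := by
    intro x hx x' hx' hxx
    have h1 := key x hx fθ Polynomial.X (by rw [← hfθ, Polynomial.aeval_X])
    have h2 := key x' hx' fθ Polynomial.X (by rw [← hfθ, Polynomial.aeval_X])
    rw [evX] at h1 h2
    change _ = x at h1
    change _ = x' at h2
    rw [← h1, ← h2, hxx]
  set p' := P.map (eval p)
  have hm : p'.Monic := hPm.map _
  have hroots : {x | ev x P = 0} = (p'.roots.toFinset : Set ℂ) := by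
    ext x; simp [evm, p', hm.ne_zero]
  -- the Bézout identity specializes because `c(p) ≠ 0`
  have hsep : p'.Separable := by
    refine ⟨Polynomial.C (eval p c)⁻¹ * U.map (eval p), Polynomial.C (eval p c)⁻¹ * V.map (eval p), ?_⟩
    have := congrArg (Polynomial.map (eval p)) hUV
    rw [Polynomial.map_add, Polynomial.map_mul, Polynomial.map_mul, Polynomial.map_C,
      ← Polynomial.derivative_map] at this
    rw [mul_assoc, mul_assoc, ← mul_add, this, ← Polynomial.C_mul, inv_mul_cancel₀ hcp,
      Polynomial.C_1]
  rw [hset]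
  refine ⟨?_, ?_⟩
  · rw [hroots]; exact (Finset.finite_toSet _).image _
  · rw [hinj.ncard_image, hroots, Set.ncard_coe_finset, Multiset.toFinset_card_of_nodup
      (Polynomial.nodup_roots hsep), ← (IsAlgClosed.splits p').natDegree_eq_card_roots,
      hPm.natDegree_map, hPd]

end Core

section Core
open MvPolynomial

/-- The largest linearly independent families of polynomials in `u` have `[L : ℂ(t)]` members, since
these polynomials span `L` over `ℂ(t)`. -/
theorem core_ind {σ τ L : Type} [Field L] [Algebra ℂ L]
    [Algebra (MvPolynomial σ ℂ) L] [IsScalarTower ℂ (MvPolynomial σ ℂ) L]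
    [Algebra (FractionRing (MvPolynomial σ ℂ)) L]
    [IsScalarTower (MvPolynomial σ ℂ) (FractionRing (MvPolynomial σ ℂ)) L]
    [FiniteDimensional (FractionRing (MvPolynomial σ ℂ)) L] (u : τ → L)
    (hspan : Algebra.adjoin (FractionRing (MvPolynomial σ ℂ)) (Set.range u) = ⊤) :
    (∃ Θ : Fin (Module.finrank (FractionRing (MvPolynomial σ ℂ)) L) → MvPolynomial τ ℂ,
      Ind (fun i => algebraMap (MvPolynomial σ ℂ) L (X i)) u Θ) ∧
    ∀ (m : ℕ) (Θ : Fin m → MvPolynomial τ ℂ),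
      Ind (fun i => algebraMap (MvPolynomial σ ℂ) L (X i)) u Θ →
        m ≤ Module.finrank (FractionRing (MvPolynomial σ ℂ)) L := by
  have haev : (aeval fun i => algebraMap (MvPolynomial σ ℂ) L (X i)) =
      IsScalarTower.toAlgHom ℂ (MvPolynomial σ ℂ) L := by
    ext i; simp
  have hInd : ∀ (m : ℕ) (Θ : Fin m → MvPolynomial τ ℂ),
      Ind (fun i => algebraMap (MvPolynomial σ ℂ) L (X i)) u Θ ↔
        LinearIndependent (FractionRing (MvPolynomial σ ℂ)) (fun i => aeval u (Θ i)) := by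
    intro m Θ
    rw [← LinearIndependent.iff_fractionRing (MvPolynomial σ ℂ), Fintype.linearIndependent_iff,
      Ind, haev]
    simp [Algebra.smul_def]
  constructor
  · have hs : Submodule.span (FractionRing (MvPolynomial σ ℂ))
        (Set.range (aeval u : MvPolynomial τ ℂ →ₐ[ℂ] L)) = ⊤ := by
      rw [eq_top_iff, ← Algebra.top_toSubmodule, ← hspan, Algebra.adjoin_eq_span]
      apply Submodule.span_mono
      intro x hx
      have : Submonoid.closure (Set.range u) ≤
          (aeval u : MvPolynomial τ ℂ →ₐ[ℂ] L).range.toSubmonoid := by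
        rw [Submonoid.closure_le]
        rintro _ ⟨k, rfl⟩
        exact ⟨X k, by simp⟩
      exact this hx
    have hex := Submodule.exists_fun_fin_finrank_span_eq
      (FractionRing (MvPolynomial σ ℂ)) (Set.range (aeval u : MvPolynomial τ ℂ →ₐ[ℂ] L))
    rw [hs, finrank_top] at hex
    obtain ⟨f, hf, -, hf2⟩ := hex
    choose Θ hΘ using hf
    refine ⟨Θ, (hInd _ _).2 ?_⟩
    simpa only [hΘ] using hf2
  · intro m Θ h
    simpa using ((hInd m Θ).1 h).fintype_card_le_finrank

theorem ind_comp {σ τ B B' : Type} [CommRing B] [Algebra ℂ B] [CommRing B'] [Algebra ℂ B']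
    (ψ : B →ₐ[ℂ] B') (hψ : Function.Injective ψ) (t : σ → B) (u : τ → B) {m : ℕ}
    (Θ : Fin m → MvPolynomial τ ℂ) :
    Ind (fun i => ψ (t i)) (fun k => ψ (u k)) Θ ↔ Ind t u Θ := by
  have e : ∀ {ρ : Type} (v : ρ → B) (f : MvPolynomial ρ ℂ),
      aeval (fun i => ψ (v i)) f = ψ (aeval v f) := by
    intro ρ v f
    rw [← AlgHom.comp_apply, comp_aeval]
  simp only [Ind, e, ← map_mul, ← map_sum, map_eq_zero_iff ψ hψ]

theorem fiberPts_comp {σ τ B B' : Type} [CommRing B] [Algebra ℂ B] [CommRing B'] [Algebra ℂ B']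
    (ψ : B →ₐ[ℂ] B') (hψ : Function.Injective ψ) (t : σ → B) (u : τ → B) (p : σ → ℂ) :
    FiberPts (fun i => ψ (t i)) (fun k => ψ (u k)) p = FiberPts t u p := by
  have e : ∀ f : MvPolynomial (σ ⊕ τ) ℂ,
      aeval (Sum.elim (fun i => ψ (t i)) (fun k => ψ (u k))) f = ψ (aeval (Sum.elim t u) f) := by
    intro f
    rw [← AlgHom.comp_apply, comp_aeval]
    congr 2
    ext (i | k) <;> rfl
  simp only [FiberPts, e, map_eq_zero_iff ψ hψ]

/-- If `t` is a transcendence basis, the number of points of the general fibre equals the maximal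
number `D` of polynomials in `u` linearly independent over `ℂ[t]`; both are `[ℂ(t, u) : ℂ(t)]`. -/
theorem generic_fiber {σ τ L : Type} [Finite τ] [Field L] [Algebra ℂ L] (t : σ → L) (u : τ → L)
    (ht : IsTranscendenceBasis ℂ t) :
    ∃ D : ℕ, 1 ≤ D ∧ (∃ Θ : Fin D → MvPolynomial τ ℂ, Ind t u Θ) ∧
      (∀ (m : ℕ) (Θ : Fin m → MvPolynomial τ ℂ), Ind t u Θ → m ≤ D) ∧
      ∃ g : MvPolynomial σ ℂ, g ≠ 0 ∧ ∀ p, eval p g ≠ 0 →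
        (FiberPts t u p).Finite ∧ (FiberPts t u p).ncard = D := by
  have hinj : Function.Injective (aeval t : MvPolynomial σ ℂ →ₐ[ℂ] L) := ht.1
  letI a1 : Algebra (MvPolynomial σ ℂ) L := (aeval t : MvPolynomial σ ℂ →ₐ[ℂ] L).toRingHom.toAlgebra
  have halg : ∀ r, algebraMap (MvPolynomial σ ℂ) L r = aeval t r := fun r => rfl
  haveI a2 : IsScalarTower ℂ (MvPolynomial σ ℂ) L := IsScalarTower.of_algebraMap_eq (by
    intro x; rw [halg]; simp)
  haveI a3 : FaithfulSMul (MvPolynomial σ ℂ) L := (faithfulSMul_iff_algebraMap_injective _ _).2 hinj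
  letI a4 : Algebra (FractionRing (MvPolynomial σ ℂ)) L := FractionRing.liftAlgebra _ _
  haveI a5 : IsScalarTower (MvPolynomial σ ℂ) (FractionRing (MvPolynomial σ ℂ)) L :=
    FractionRing.isScalarTower_liftAlgebra _ _
  haveI a6 : IsScalarTower ℂ (FractionRing (MvPolynomial σ ℂ)) L :=
    IsScalarTower.of_algebraMap_eq (by
      intro x
      rw [IsScalarTower.algebraMap_apply ℂ (MvPolynomial σ ℂ) (FractionRing _),
        ← IsScalarTower.algebraMap_apply (MvPolynomial σ ℂ),
        ← IsScalarTower.algebraMap_apply])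
  have hA : Algebra.IsAlgebraic (MvPolynomial σ ℂ) L := by
    have := ht.isAlgebraic
    refine Algebra.IsAlgebraic.of_ringHom_of_comp_eq ht.1.aevalEquiv.toRingEquiv (RingHom.id L)
      (EquivLike.surjective _) Function.injective_id ?_
    ext x
    · simp [halg]
    · simp [halg]
  have hF : Algebra.IsAlgebraic (FractionRing (MvPolynomial σ ℂ)) L :=
    (IsFractionRing.comap_isAlgebraic_iff (A := MvPolynomial σ ℂ)).1 hA
  -- `L` itself need not be finite over `ℂ(t)`, but its subfield generated by `u` is
  let L' := IntermediateField.adjoin (FractionRing (MvPolynomial σ ℂ)) (Set.range u)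
  haveI : FiniteDimensional (FractionRing (MvPolynomial σ ℂ)) L' := by
    have : Finite (Set.range u) := Set.finite_range u
    exact IntermediateField.finiteDimensional_adjoin
      fun x _ => (Algebra.IsAlgebraic.isAlgebraic x).isIntegral
  let u' : τ → L' := fun k => ⟨u k, IntermediateField.subset_adjoin _ _ ⟨k, rfl⟩⟩
  have hspan : Algebra.adjoin (FractionRing (MvPolynomial σ ℂ)) (Set.range u') = ⊤ := by
    apply Subalgebra.map_injective (f := L'.val) L'.val.injective
    rw [AlgHom.map_adjoin, ← Set.range_comp]
    have h1 : L'.val ∘ u' = u := rfl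
    have h2 := IntermediateField.adjoin_toSubalgebra (F := FractionRing (MvPolynomial σ ℂ)) (Set.range u)
    rw [h1, ← h2, Algebra.map_top]
    exact (IntermediateField.range_val L').symm
  haveI a7 : FaithfulSMul (MvPolynomial σ ℂ) L' :=
    (faithfulSMul_iff_algebraMap_injective _ _).2 fun x y hxy => hinj (congrArg Subtype.val hxy)
  haveI a8 : IsScalarTower ℂ (MvPolynomial σ ℂ) L' := IsScalarTower.of_algebraMap_eq (by
    intro x
    apply Subtype.ext
    exact IsScalarTower.algebraMap_apply ℂ (MvPolynomial σ ℂ) L x)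
  -- relations may be tested in `L` or in `L'`
  let vC : L' →ₐ[ℂ] L := L'.val.restrictScalars ℂ
  have hvC : Function.Injective vC := L'.val.injective
  have ht' : ∀ i, vC (algebraMap (MvPolynomial σ ℂ) L' (X i)) = t i := by
    intro i
    change algebraMap (MvPolynomial σ ℂ) L (X i) = t i
    rw [halg, aeval_X]
  rw [← show (fun i => vC (algebraMap (MvPolynomial σ ℂ) L' (X i))) = t from funext ht']
  have hu' : (fun k => vC (u' k)) = u := rfl
  rw [← hu']
  simp only [ind_comp _ hvC, fiberPts_comp _ hvC]
  obtain ⟨h1, h2⟩ := core_ind u' hspan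
  exact ⟨_, Module.finrank_pos, h1, h2, core_fiber u' hspan⟩

end Core

/-! ### Linear slices of an affine variety -/

section Sys
open MvPolynomial

/-- The same for a domain in place of a field, through its field of fractions. -/
theorem generic_fiber_domain {σ τ B : Type} [Finite τ] [CommRing B] [IsDomain B] [Algebra ℂ B]
    (t : σ → B) (u : τ → B) (ht : IsTranscendenceBasis ℂ t) :
    ∃ D : ℕ, 1 ≤ D ∧ (∃ Θ : Fin D → MvPolynomial τ ℂ, Ind t u Θ) ∧
      (∀ (m : ℕ) (Θ : Fin m → MvPolynomial τ ℂ), Ind t u Θ → m ≤ D) ∧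
      ∃ g : MvPolynomial σ ℂ, g ≠ 0 ∧ ∀ p, eval p g ≠ 0 →
        (FiberPts t u p).Finite ∧ (FiberPts t u p).ncard = D := by
  have hinj : Function.Injective (IsScalarTower.toAlgHom ℂ B (FractionRing B)) :=
    IsFractionRing.injective B (FractionRing B)
  have : Algebra.IsAlgebraic B (FractionRing B) :=
    (IsFractionRing.comap_isAlgebraic_iff (A := B) (K := FractionRing B)).2 inferInstance
  have h := generic_fiber (fun i => IsScalarTower.toAlgHom ℂ B (FractionRing B) (t i))
    (fun i => IsScalarTower.toAlgHom ℂ B (FractionRing B) (u i)) (ht.algebraMap_comp)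
  simpa only [ind_comp _ hinj, fiberPts_comp _ hinj] using h

/-- If `t` satisfies a relation, the fibre over `p` is empty unless `p` satisfies it too. -/
theorem fiberPts_eq_empty {σ τ B : Type} [CommRing B] [Algebra ℂ B] {t : σ → B} (u : τ → B)
    {f : MvPolynomial σ ℂ} (hf : aeval t f = 0) {p : σ → ℂ} (hp : eval p f ≠ 0) :
    FiberPts t u p = ∅ := by
  ext q
  simp only [Set.mem_empty_iff_false, iff_false]
  intro hq
  apply hp
  have := hq (rename Sum.inl f) (by rw [aeval_rename, Sum.elim_comp_inl, hf])
  rwa [eval_rename, Sum.elim_comp_inl] at this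

/-- The complex zero set of all polynomial relations of `z`, that is, the variety with generic
point `z`. -/
def VZ {κ K : Type} [Field K] [Algebra ℂ K] (z : κ → K) : Set (κ → ℂ) :=
  {y | ∀ f : MvPolynomial κ ℂ, aeval z f = 0 → eval y f = 0}

variable {κ J : Type} {M : J → Type} [∀ j, Fintype (M j)]

/-- The affine-linear slice with one equation for each `j : J`, involving only the variables
`ζ j k`. The parameter `p` holds the coefficient of `ζ j k` at `inl ⟨j, k⟩` and the constant term at
`inr j`. -/
def Slc (ζ : ∀ j, M j → κ) (p : (Σ j, M j) ⊕ J → ℂ) : Set (κ → ℂ) :=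
  {y | ∀ j, p (Sum.inr j) + ∑ k, p (Sum.inl ⟨j, k⟩) * y (ζ j k) = 0}

/-- The parameters of the generic slice through `z`: independent variables as coefficients, and the
constant terms that make the equations hold at `z`. -/
noncomputable def sysT {K : Type} [Field K] (ζ : ∀ j, M j → κ) (z : κ → K) :
    (Σ j, M j) ⊕ J → MvPolynomial (Σ j, M j) K :=
  Sum.elim X (fun j => -∑ k, X ⟨j, k⟩ * C (z (ζ j k)))

/-- The points of the variety of `z` on the slice `p` form the fibre over `p` for the generic slice
through `z`. -/
theorem sys_fiberPts {K : Type} [Field K] [Algebra ℂ K] (ζ : ∀ j, M j → κ) (z : κ → K)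
    (p : (Σ j, M j) ⊕ J → ℂ) :
    FiberPts (sysT ζ z) (fun k => C (z k)) p = VZ z ∩ Slc ζ p := by
  ext y
  constructor
  · intro hy
    constructor
    · intro f hf
      have := hy (rename Sum.inr f) (by
        rw [aeval_rename, Sum.elim_comp_inr]
        have : aeval (fun k => (C (z k) : MvPolynomial (Σ j, M j) K)) f = C (aeval z f) := by
          have := comp_aeval (R := ℂ) z (IsScalarTower.toAlgHom ℂ K (MvPolynomial (Σ j, M j) K))
          exact (congrArg (fun φ => φ f) this).symm
        rw [this, hf, map_zero])
      rwa [eval_rename, Sum.elim_comp_inr] at this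
    · intro j
      have := hy (X (Sum.inl (Sum.inr j)) +
        ∑ k, X (Sum.inl (Sum.inl ⟨j, k⟩)) * X (Sum.inr (ζ j k))) (by simp [sysT])
      simpa using this
  · rintro ⟨hV, hS⟩ f hf
    let Φ : MvPolynomial (((Σ j, M j) ⊕ J) ⊕ κ) ℂ →ₐ[ℂ]
        MvPolynomial (Σ j, M j) (MvPolynomial κ ℂ) :=
      aeval (Sum.elim (Sum.elim X (fun j => -∑ k, X ⟨j, k⟩ * C (X (ζ j k)))) (fun k => C (X k)))
    have h1 : (mapAlgHom (aeval z)).comp Φ =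
        aeval (Sum.elim (sysT ζ z) (fun k => (C (z k) : MvPolynomial (Σ j, M j) K))) := by
      ext x : 1
      rcases x with (x | j) | k
      · simp [Φ, sysT]
      · simp [Φ, sysT]
      · simp [Φ, sysT]
    have h2 : ((aeval (p ∘ Sum.inl)).comp (mapAlgHom (aeval y))).comp Φ = aeval (Sum.elim p y) := by
      ext x : 1
      rcases x with (x | j) | k
      · simp [Φ]
      · have := hS j
        simp [Φ]
        linear_combination -this
      · simp [Φ]
    have h3 : mapAlgHom (aeval (R := ℂ) y) (Φ f) = 0 := by
      ext d
      have h4 := congrArg (coeff d) (congrArg (fun φ => φ f) h1)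
      simp only [AlgHom.comp_apply, hf] at h4
      simp only [mapAlgHom_apply, coeff_map, coeff_zero] at h4 ⊢
      simpa [aeval_eq_eval] using hV (coeff d (Φ f)) h4
    have h5 := congrArg (fun φ => φ f) h2
    simp only [AlgHom.comp_apply, h3, map_zero] at h5
    rw [aeval_eq_eval] at h5
    exact h5.symm

end Sys

section Sys
open MvPolynomial

variable {κ J K : Type} {M : J → Type} [∀ j, Fintype (M j)] [Fintype J] [Field K] [Algebra ℂ K]

theorem trdeg_mvPolynomial (P : Type) [Fintype P] {r : ℕ} (hr : Algebra.trdeg ℂ K = r) :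
    Algebra.trdeg ℂ (MvPolynomial P K) = (r + Fintype.card P : ℕ) := by
  rw [← trdeg_add_eq ℂ K (A := MvPolynomial P K), hr, MvPolynomial.trdeg_of_isDomain]
  simp

theorem exists_rel {σ B : Type} [CommRing B] [Algebra ℂ B] {t : σ → B}
    (h : ¬ AlgebraicIndependent ℂ t) : ∃ f : MvPolynomial σ ℂ, f ≠ 0 ∧ aeval t f = 0 := by
  rw [algebraicIndependent_iff] at h
  push Not at h
  obtain ⟨f, h1, h2⟩ := h
  exact ⟨f, h2, h1⟩

/-- A general slice with more equations than the dimension misses the variety: its parameters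
cannot be algebraically independent. -/
theorem sys_overdet (ζ : ∀ j, M j → κ) (z : κ → K) {r : ℕ} (hr : Algebra.trdeg ℂ K = r)
    (hJ : r < Fintype.card J) :
    ∃ g : MvPolynomial ((Σ j, M j) ⊕ J) ℂ, g ≠ 0 ∧ ∀ p, eval p g ≠ 0 → VZ z ∩ Slc ζ p = ∅ := by
  have h : ¬ AlgebraicIndependent ℂ (sysT ζ z) := by
    intro h
    have := h.cardinalMk_le_trdeg
    rw [trdeg_mvPolynomial _ hr, Cardinal.mk_fintype, Fintype.card_sum] at this
    have := Nat.cast_le.1 this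
    omega
  obtain ⟨f, hf, hft⟩ := exists_rel h
  refine ⟨f, hf, fun p hp => ?_⟩
  rw [← sys_fiberPts, fiberPts_eq_empty _ hft hp]

/-- With as many equations as the dimension, independent slice parameters form a transcendence
basis. -/
theorem sys_basis (ζ : ∀ j, M j → κ) (z : κ → K) {r : ℕ} (hr : Algebra.trdeg ℂ K = r)
    (hJ : Fintype.card J = r) (h : AlgebraicIndependent ℂ (sysT ζ z)) :
    IsTranscendenceBasis ℂ (sysT ζ z) := by
  refine h.isTranscendenceBasis_of_trdeg_le_of_finite ?_
  rw [trdeg_mvPolynomial _ hr, Cardinal.mk_fintype, Fintype.card_sum, Nat.cast_le]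
  omega

/-- With as many equations as the dimension, the number `D` of points on a general slice is the
maximal size of a family independent over the slice parameters. If those are algebraically
dependent, then `D = 0`. -/
theorem sys_det [Finite κ] (ζ : ∀ j, M j → κ) (z : κ → K) {r : ℕ} (hr : Algebra.trdeg ℂ K = r)
    (hJ : Fintype.card J = r) :
    ∃ D : ℕ,
      (∃ Θ : Fin D → MvPolynomial κ ℂ, Ind (sysT ζ z) (fun k => C (z k)) Θ) ∧
      (∀ (m : ℕ) (Θ : Fin m → MvPolynomial κ ℂ),
        Ind (sysT ζ z) (fun k => C (z k)) Θ → m ≤ D) ∧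
      ∃ g : MvPolynomial ((Σ j, M j) ⊕ J) ℂ, g ≠ 0 ∧ ∀ p, eval p g ≠ 0 →
        (VZ z ∩ Slc ζ p).Finite ∧ (VZ z ∩ Slc ζ p).ncard = D := by
  by_cases h : AlgebraicIndependent ℂ (sysT ζ z)
  · obtain ⟨D, -, h1, h2, h3⟩ :=
      generic_fiber_domain _ (fun k => C (z k)) (sys_basis ζ z hr hJ h)
    refine ⟨D, h1, h2, ?_⟩
    simpa only [sys_fiberPts] using h3
  · obtain ⟨f, hf, hft⟩ := exists_rel h
    refine ⟨0, ⟨fun i => i.elim0, fun q _ i => i.elim0⟩, ?_, f, hf, fun p hp => ?_⟩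
    · intro m Θ hΘ
      by_contra! hm
      exact hf (hΘ (fun _ => f) (by simp [hft]) ⟨0, hm⟩)
    · rw [← sys_fiberPts, fiberPts_eq_empty _ hft hp]
      simp

/-- A general slice of complementary dimension avoids the proper subvariety `f = 0`. -/
theorem sys_avoid (ζ : ∀ j, M j → κ) (z : κ → K) {r : ℕ} (hr : Algebra.trdeg ℂ K = r)
    (hJ : Fintype.card J = r) (f : MvPolynomial κ ℂ) (hf : aeval z f ≠ 0) :
    ∃ g : MvPolynomial ((Σ j, M j) ⊕ J) ℂ, g ≠ 0 ∧ ∀ p, eval p g ≠ 0 →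
      ∀ y ∈ VZ z ∩ Slc ζ p, eval y f ≠ 0 := by
  by_cases h : AlgebraicIndependent ℂ (sysT ζ z)
  · have hb := sys_basis ζ z hr hJ h
    letI a1 : Algebra (MvPolynomial ((Σ j, M j) ⊕ J) ℂ) (MvPolynomial (Σ j, M j) K) :=
      (aeval (sysT ζ z) : MvPolynomial _ ℂ →ₐ[ℂ] _).toRingHom.toAlgebra
    have halg : ∀ r, algebraMap (MvPolynomial ((Σ j, M j) ⊕ J) ℂ) (MvPolynomial (Σ j, M j) K) r =
        aeval (sysT ζ z) r := fun r => rfl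
    have hA : Algebra.IsAlgebraic (MvPolynomial ((Σ j, M j) ⊕ J) ℂ)
        (MvPolynomial (Σ j, M j) K) := by
      have := hb.isAlgebraic
      refine Algebra.IsAlgebraic.of_ringHom_of_comp_eq h.aevalEquiv.toRingEquiv (RingHom.id _)
        (EquivLike.surjective _) Function.injective_id ?_
      ext x
      · simp [halg]
      · simp [halg]
    -- `f(z)` is algebraic over the slice parameters; in an equation with nonzero constant term,
    -- `f = 0` forces the constant term to vanish at `p`
    obtain ⟨Q, hQ0, hQ⟩ := (hA.isAlgebraic (C (aeval z f))).exists_nonzero_coeff_and_aeval_eq_zero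
      (mem_nonZeroDivisors_of_ne_zero ((map_ne_zero_iff _ (C_injective _ _)).2 hf))
    refine ⟨Q.coeff 0, hQ0, fun p hp y hy hyf => hp ?_⟩
    rw [← sys_fiberPts] at hy
    haveI : IsScalarTower ℂ (MvPolynomial ((Σ j, M j) ⊕ J) ℂ) (MvPolynomial (Σ j, M j) K) :=
      IsScalarTower.of_algebraMap_eq fun c => by
        rw [halg, MvPolynomial.algebraMap_eq (R := ℂ), aeval_C]
    have hu : aeval (fun k => (C (z k) : MvPolynomial (Σ j, M j) K)) f = C (aeval z f) := by
      have := comp_aeval (R := ℂ) z (IsScalarTower.toAlgHom ℂ K (MvPolynomial (Σ j, M j) K))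
      exact (congrArg (fun φ => φ f) this).symm
    have := hy (Polynomial.eval₂AlgHom (rename Sum.inl) (rename Sum.inr f)
        (fun _ => Commute.all _ _) Q) (by
      have key : (aeval (Sum.elim (sysT ζ z) fun k => C (z k))).comp
          (Polynomial.eval₂AlgHom (rename Sum.inl) (rename Sum.inr f)
            (fun _ => Commute.all _ _)) =
          (Polynomial.aeval (R := MvPolynomial ((Σ j, M j) ⊕ J) ℂ)
            (C (aeval z f) : MvPolynomial (Σ j, M j) K)).restrictScalars ℂ := by
        apply Polynomial.algHom_ext'
        · ext i; simp [halg, Polynomial.CAlgHom]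
        · simp [aeval_rename, ← hu, Function.comp_def]
      exact (congrArg (fun φ => φ Q) key).trans hQ)
    have key : (aeval (Sum.elim p y)).comp
          (Polynomial.eval₂AlgHom (rename Sum.inl) (rename Sum.inr f)
            (fun _ => Commute.all _ _)) =
          (aeval p).comp ((Polynomial.aeval (R := MvPolynomial ((Σ j, M j) ⊕ J) ℂ)
            0).restrictScalars ℂ) := by
      apply Polynomial.algHom_ext'
      · ext i; simp [Polynomial.CAlgHom]
      · simp [aeval_rename, MvPolynomial.aeval_eq_eval, MvPolynomial.eval_rename, hyf]
    have key := congrArg (fun φ => φ Q) key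
    rw [← MvPolynomial.coe_aeval_eq_eval] at this
    rw [← MvPolynomial.aeval_eq_eval, Polynomial.coeff_zero_eq_aeval_zero]
    exact key.symm.trans this
  · obtain ⟨f, hf, hft⟩ := exists_rel h
    refine ⟨f, hf, fun p hp y hy => ?_⟩
    rw [← sys_fiberPts, fiberPts_eq_empty _ hft hp] at hy
    exact hy.elim

end Sys

section Sys
open MvPolynomial

variable {κ J K : Type} {M : J → Type} [∀ j, Fintype (M j)] [Fintype J] [Field K] [Algebra ℂ K]

/-- The slice parameters and the coordinates of `z` together generate everything up to algebraic
extension. -/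
theorem sys_alg (ζ : ∀ j, M j → κ) (z : κ → K)
    (hz : Algebra.IsAlgebraic (Algebra.adjoin ℂ (Set.range z)) K) :
    Algebra.IsAlgebraic (Algebra.adjoin ℂ (Set.range (sysT ζ z) ∪
      Set.range fun k => (C (z k) : MvPolynomial (Σ j, M j) K))) (MvPolynomial (Σ j, M j) K) := by
  set A := Algebra.adjoin ℂ (Set.range (sysT ζ z) ∪
      Set.range fun k => (C (z k) : MvPolynomial (Σ j, M j) K)) with hA
  have hCz : ∀ a ∈ Algebra.adjoin ℂ (Set.range z), (C a : MvPolynomial (Σ j, M j) K) ∈ A := by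
    intro a ha
    induction ha using Algebra.adjoin_induction with
    | mem x hx =>
      obtain ⟨k, rfl⟩ := hx
      exact Algebra.subset_adjoin (Or.inr ⟨k, rfl⟩)
    | algebraMap c => exact A.algebraMap_mem c
    | add x y _ _ hx hy => rw [map_add]; exact A.add_mem hx hy
    | mul x y _ _ hx hy => rw [map_mul]; exact A.mul_mem hx hy
  refine ⟨fun b => ?_⟩
  induction b using MvPolynomial.induction_on with
  | C a =>
    let ι : Algebra.adjoin ℂ (Set.range z) →+* A :=
      { toFun := fun a => ⟨C a.1, hCz _ a.2⟩
        map_one' := by ext1; simp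
        map_mul' := fun a b => by ext1; simp
        map_zero' := by ext1; simp
        map_add' := fun a b => by ext1; simp }
    refine (hz.isAlgebraic a).ringHom_of_comp_eq ι (C : K →+* MvPolynomial (Σ j, M j) K) ?_ rfl
    intro x y hxy
    exact Subtype.ext (C_injective _ _ (congrArg Subtype.val hxy))
  | add p q hp hq => exact hp.add hq
  | mul_X p i hp =>
    refine hp.mul ?_
    have : (X i : MvPolynomial (Σ j, M j) K) ∈ A := Algebra.subset_adjoin (Or.inl ⟨Sum.inl i, rfl⟩)
    exact isAlgebraic_algebraMap (⟨_, this⟩ : A)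

/-- With fewer equations than the dimension, general slices are either all empty or all infinite.
In the second case some coordinate is free: it extends the slice parameters to part of a
transcendence basis, and so takes all but finitely many values on the slice. -/
theorem sys_underdet [Finite κ] (ζ : ∀ j, M j → κ) (z : κ → K) {r : ℕ}
    (hr : Algebra.trdeg ℂ K = r)
    (hz : Algebra.IsAlgebraic (Algebra.adjoin ℂ (Set.range z)) K) (hJ : Fintype.card J < r) :
    ∃ g : MvPolynomial ((Σ j, M j) ⊕ J) ℂ, g ≠ 0 ∧
      ((∀ p, eval p g ≠ 0 → VZ z ∩ Slc ζ p = ∅) ∨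
       (∀ p, eval p g ≠ 0 → (VZ z ∩ Slc ζ p).Infinite)) := by
  by_cases h : AlgebraicIndependent ℂ (sysT ζ z)
  swap
  · obtain ⟨f, hf, hft⟩ := exists_rel h
    exact ⟨f, hf, Or.inl fun p hp => by rw [← sys_fiberPts, fiberPts_eq_empty _ hft hp]⟩
  have := sys_alg ζ z hz
  -- complete the slice parameters to a transcendence basis by coordinates indexed by `S`
  obtain ⟨u, hu1, hu2, hu⟩ := exists_isTranscendenceBasis_between (R := ℂ) _ _
    (Set.subset_union_left (s := Set.range (sysT ζ z))
      (t := Set.range fun k => (C (z k) : MvPolynomial (Σ j, M j) K))) h.coe_range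
  let S := ↥(u \ Set.range (sysT ζ z))
  have hk : ∀ s : S, ∃ k, C (z k) = s.1 := fun s => (hu2 s.2.1).resolve_left s.2.2
  choose k hk using hk
  have hS : Nonempty S := by
    by_contra hS
    have hur : Set.range (sysT ζ z) = u := by
      refine hu1.antisymm fun x hx => ?_
      by_contra hx'
      exact hS ⟨⟨x, hx, hx'⟩⟩
    have hc := hu.cardinalMk_eq_trdeg
    rw [← hur, Cardinal.mk_range_eq _ h.injective, trdeg_mvPolynomial _ hr, Cardinal.mk_fintype,
      Fintype.card_sum, Nat.cast_inj] at hc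
    omega
  obtain ⟨s0⟩ := hS
  have ht' : IsTranscendenceBasis ℂ (Sum.elim (sysT ζ z) fun s : S => C (z (k s))) := by
    classical
    let E : (((Σ j, M j) ⊕ J) ⊕ S) ≃ u :=
      ((Equiv.ofInjective _ h.injective).sumCongr (Equiv.refl _)).trans
        (Equiv.Set.sumDiffSubset hu1)
    have : (Sum.elim (sysT ζ z) fun s : S => C (z (k s))) = Subtype.val ∘ E := by
      ext1 x
      rcases x with x | x
      · rfl
      · exact hk x
    rw [this]
    exact (isTranscendenceBasis_equiv E).2 hu
  obtain ⟨D, hD, -, -, g', hg', hfib⟩ := generic_fiber_domain _ (fun k => C (z k)) ht'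
  have hne : ∀ p, eval p g' ≠ 0 → (FiberPts (Sum.elim (sysT ζ z) fun s : S => C (z (k s)))
      (fun k => C (z k)) p).Nonempty := by
    intro p hp
    rw [Set.nonempty_iff_ne_empty]
    intro he
    have := (hfib p hp).2
    rw [he, Set.ncard_empty] at this
    omega
  -- freeze the additional basis coordinates at the values prescribed by `p0`
  obtain ⟨p0, hp0⟩ : ∃ p, eval p g' ≠ 0 := by
    by_contra! hc
    exact hg' (MvPolynomial.funext (by simpa using hc))
  classical
  have heval : ∀ p, eval p (aeval (Sum.elim X fun s : S => C (p0 (Sum.inr s))) g' :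
      MvPolynomial ((Σ j, M j) ⊕ J) ℂ) = eval (Sum.elim p (p0 ∘ Sum.inr)) g' := by
    intro p
    rw [← MvPolynomial.aeval_eq_eval, ← MvPolynomial.aeval_eq_eval, ← AlgHom.comp_apply, comp_aeval]
    congr 2
    ext x; rcases x with x | x <;> simp
  refine ⟨aeval (Sum.elim X fun s : S => C (p0 (Sum.inr s))) g', ?_, Or.inr ?_⟩
  · intro h0
    have := heval (p0 ∘ Sum.inl)
    rw [h0, map_zero, Sum.elim_comp_inl_inr] at this
    exact hp0 this.symm
  · intro p hp hfin
    rw [heval] at hp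
    -- now let the free coordinate `s0` vary, the other ones remaining frozen
    set G : Polynomial ℂ := aeval (Sum.elim (fun x => Polynomial.C (p x))
      fun s : S => if s = s0 then Polynomial.X else Polynomial.C (p0 (Sum.inr s))) g' with hG
    have hGe : ∀ x, G.eval x = eval (Sum.elim p (Function.update (p0 ∘ Sum.inr) s0 x)) g' := by
      intro x
      rw [← Polynomial.coe_aeval_eq_eval, hG, ← MvPolynomial.aeval_eq_eval]
      change (((Polynomial.aeval x).comp (aeval _)) : MvPolynomial _ ℂ →ₐ[ℂ] ℂ) g' = _
      rw [comp_aeval]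
      congr 2
      ext y; rcases y with y | y
      · simp
      · by_cases hy : y = s0
        · subst hy; simp
        · simp [hy]
    have hG0 : G ≠ 0 := by
      intro h0
      have := hGe (p0 (Sum.inr s0))
      rw [h0, Polynomial.eval_zero] at this
      apply hp
      rw [this]
      congr 2
      ext y; rcases y with y | y
      · simp
      · by_cases hy : y = s0
        · subst hy; simp
        · simp [hy]
    -- every value of the free coordinate that is not a root of `G` occurs on the slice
    have hsub : (Set.univ : Set ℂ) ⊆ ((fun y : κ → ℂ => y (k s0)) '' (VZ z ∩ Slc ζ p)) ∪
        {x | G.IsRoot x} := by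
      intro x _
      by_cases hx : G.eval x = 0
      · exact Or.inr hx
      rw [hGe] at hx
      obtain ⟨y, hy⟩ := hne _ hx
      refine Or.inl ⟨y, ?_, ?_⟩
      · rw [← sys_fiberPts]
        intro q hq
        have := hy (rename (Sum.map Sum.inl id) q) (by
          rw [aeval_rename, ← hq]; congr 2; ext v; rcases v with v | v <;> rfl)
        rw [eval_rename] at this
        rw [← this]; congr 2; ext v; rcases v with v | v <;> rfl
      · have := hy (X (Sum.inr (k s0)) - X (Sum.inl (Sum.inr s0)))
          (by rw [map_sub, aeval_X, aeval_X]; exact sub_self _)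
        rw [map_sub, eval_X, eval_X, sub_eq_zero] at this
        exact this.trans (Function.update_self _ _ _)
    exact Set.infinite_univ (((hfin.image _).union (Polynomial.finite_setOfPred_isRoot hG0)).subset hsub)

end Sys

/-! ### Semicontinuity under specialization of linear forms -/

section SC
open MvPolynomial

variable {κ J K : Type} {M : J → Type} [∀ j, Fintype (M j)] [Fintype J] [Field K] [Algebra ℂ K]

/-- Let `E` deform the evaluation at `t`, which it equals modulo the deformation parameter. If the
`Θ i` are independent over `t`, any relation among them over the deformation has zero coefficients:
the lowest ones vanish by independence, and one divides by the deformation parameter. -/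
theorem coeff_zero_of_ind {P J B : Type} [CommRing B] [Algebra ℂ B] {κ : Type} {t : P ⊕ J → B}
    {u : κ → B} {m : ℕ} {Θ : Fin m → MvPolynomial κ ℂ} (h : Ind t u Θ)
    (E : Polynomial (MvPolynomial (P ⊕ J) ℂ) →ₐ[ℂ] Polynomial B)
    (hE0 : ∀ w, (E w).coeff 0 = aeval t (w.coeff 0)) (hEX : E Polynomial.X = Polynomial.X)
    (N : ℕ) : ∀ W : Fin m → Polynomial (MvPolynomial (P ⊕ J) ℂ),
      ∑ i, E (W i) * Polynomial.C (aeval u (Θ i)) = 0 → ∀ i, (W i).coeff N = 0 := by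
  induction N with
  | zero =>
    intro W hW
    apply h (fun i => (W i).coeff 0)
    have := congrArg (fun w => Polynomial.coeff w 0) hW
    simpa only [Polynomial.finset_sum_coeff, Polynomial.mul_coeff_zero, hE0,
        Polynomial.coeff_C_zero, Polynomial.coeff_zero] using this
  | succ N ih =>
    intro W hW i
    have h0 : ∀ i, (W i).coeff 0 = 0 := by
      apply h (fun i => (W i).coeff 0)
      have := congrArg (fun w => Polynomial.coeff w 0) hW
      simpa only [Polynomial.finset_sum_coeff, Polynomial.mul_coeff_zero, hE0,
        Polynomial.coeff_C_zero, Polynomial.coeff_zero] using this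
    have hd : ∀ i, W i = Polynomial.X * (W i).divX := by
      intro i
      conv_lhs => rw [← Polynomial.X_mul_divX_add (W i), h0]
      simp
    rw [← Polynomial.coeff_divX]
    refine ih (fun i => (W i).divX) ?_ i
    have : Polynomial.X * ∑ i, E ((W i).divX) * Polynomial.C (aeval u (Θ i)) = 0 := by
      rw [← hW, Finset.mul_sum]
      refine Finset.sum_congr rfl fun i _ => ?_
      conv_rhs => rw [hd i, map_mul, hEX]
      ring
    exact Polynomial.isRegular_X.left (by simpa using this)

/-- Semicontinuity of independence. If the coefficients of the linear forms are specialized to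
polynomials `ρ` in fewer parameters and a family is independent over the specialized slice
parameters, it is independent over those of the generic slice. -/
theorem ind_specialize {P' B' : Type} [CommRing B'] [Algebra ℂ B'] [Algebra K B']
    [IsScalarTower ℂ K B'] (ζ : ∀ j, M j → κ) (z : κ → K) (t' : P' ⊕ J → B')
    (ρ : (Σ j, M j) → MvPolynomial P' ℂ)
    (ht' : ∀ j, t' (Sum.inr j) =
      -∑ k, aeval (fun p => t' (Sum.inl p)) (ρ ⟨j, k⟩) * algebraMap K B' (z (ζ j k)))
    {m : ℕ} (Θ : Fin m → MvPolynomial κ ℂ) (h : Ind t' (fun k => algebraMap K B' (z k)) Θ) :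
    Ind (sysT ζ z) (fun k => C (z k)) Θ := by
  intro q hq i
  by_contra hqi
  -- a point `a` where a coefficient of a hypothetical relation does not vanish
  obtain ⟨a, ha⟩ : ∃ a, eval a (q i) ≠ 0 := by
    by_contra! hc
    exact hqi (MvPolynomial.funext (by simpa using hc))
  -- deform the coefficients along the line `ρ + X α`, which for `X = 1` and zero parameters reaches
  -- the coefficients of `a`
  let α : (Σ j, M j) → ℂ := fun p => a (Sum.inl p) - eval 0 (ρ p)
  let S : MvPolynomial ((Σ j, M j) ⊕ J) ℂ →ₐ[ℂ] Polynomial (MvPolynomial (P' ⊕ J) ℂ) :=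
    aeval (Sum.elim
      (fun p => Polynomial.C (rename Sum.inl (ρ p)) + Polynomial.X * Polynomial.C (C (α p)))
      (fun j => Polynomial.C (X (Sum.inr j))))
  let E0 : MvPolynomial (P' ⊕ J) ℂ →ₐ[ℂ] Polynomial B' :=
    aeval (Sum.elim (fun p => Polynomial.C (t' (Sum.inl p)))
      (fun j => Polynomial.C (t' (Sum.inr j)) - Polynomial.X * Polynomial.C
        (∑ k, algebraMap ℂ B' (α ⟨j, k⟩) * algebraMap K B' (z (ζ j k)))))
  let E : Polynomial (MvPolynomial (P' ⊕ J) ℂ) →ₐ[ℂ] Polynomial B' :=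
    Polynomial.eval₂AlgHom E0 Polynomial.X (fun _ => Commute.all _ _)
  let χ : MvPolynomial (Σ j, M j) K →ₐ[ℂ] Polynomial B' :=
    AlgHom.restrictScalars ℂ (aeval (R := K) (fun p =>
      Polynomial.C (aeval (fun p => t' (Sum.inl p)) (ρ p)) +
        Polynomial.X * Polynomial.C (algebraMap ℂ B' (α p))))
  have hEX : E Polynomial.X = Polynomial.X := by simp [E]
  have hEC : ∀ f, E (Polynomial.C f) = E0 f := by intro f; simp [E]
  have hE0 : ∀ w, (E w).coeff 0 = aeval t' (w.coeff 0) := by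
    intro w
    have key : ((Polynomial.aeval (R := B') 0).restrictScalars ℂ).comp E =
        (aeval t').comp ((Polynomial.aeval (R := MvPolynomial (P' ⊕ J) ℂ) 0).restrictScalars ℂ) := by
      apply Polynomial.algHom_ext'
      · ext x; rcases x with x | x <;> simp [E, E0, Polynomial.CAlgHom]
      · simp [E]
    rw [Polynomial.coeff_zero_eq_aeval_zero, Polynomial.coeff_zero_eq_aeval_zero]
    exact congrArg (fun φ => φ w) key
  have hχC : ∀ a : K, χ (C a) = Polynomial.C (algebraMap K B' a) := by
    intro a
    simp [χ, Polynomial.algebraMap_apply]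
  have hχX : ∀ p, χ (X p) = Polynomial.C (aeval (fun p => t' (Sum.inl p)) (ρ p)) +
        Polynomial.X * Polynomial.C (algebraMap ℂ B' (α p)) := by
    intro p
    simp [χ]
  have hE0r : ∀ f : MvPolynomial P' ℂ, E0 (rename Sum.inl f) =
      Polynomial.C (aeval (fun p => t' (Sum.inl p)) f) := by
    intro f
    have : E0.comp (rename Sum.inl) = (Polynomial.CAlgHom (R := ℂ)).comp (aeval (fun p => t' (Sum.inl p))) := by
      ext1 x; simp [E0, Polynomial.CAlgHom]
    exact congrArg (fun φ => φ f) this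
  have hE0C : ∀ c, E0 (C c) = Polynomial.C (algebraMap ℂ B' c) := by
    intro c
    simp [E0, Polynomial.algebraMap_apply]
  have hcomp : χ.comp (aeval (sysT ζ z)) = E.comp S := by
    ext1 x
    rcases x with p | j
    · simp only [AlgHom.comp_apply, aeval_X, sysT, Sum.elim_inl, S, map_add, map_mul, hEX, hEC, hE0r,
        hE0C, hχX]
    · simp only [AlgHom.comp_apply, aeval_X, sysT, Sum.elim_inr, S, map_neg, map_sum, map_mul, hEX,
        hEC, hχX, hχC]
      simp only [E0, aeval_X, Sum.elim_inr, ht', map_neg, map_sum, map_mul, add_mul,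
        Finset.sum_add_distrib, Finset.mul_sum, mul_assoc]
      ring
  have hu : ∀ f : MvPolynomial κ ℂ, χ (aeval (fun k => C (z k)) f) =
      Polynomial.C (aeval (fun k => algebraMap K B' (z k)) f) := by
    intro f
    have : χ.comp (aeval (fun k => (C (z k) : MvPolynomial (Σ j, M j) K))) =
        (Polynomial.CAlgHom (R := ℂ)).comp (aeval (fun k => algebraMap K B' (z k))) := by
      ext1 x; simp [hχC, Polynomial.CAlgHom]
    exact congrArg (fun φ => φ f) this
  have hsum : ∑ i, E (S (q i)) * Polynomial.C (aeval (fun k => algebraMap K B' (z k)) (Θ i)) = 0 := by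
    have := congrArg χ hq
    rw [map_sum, map_zero] at this
    rw [← this]
    refine Finset.sum_congr rfl fun i _ => ?_
    rw [map_mul, hu]
    congr 1
    exact (congrArg (fun φ => φ (q i)) hcomp).symm
  have hS : S (q i) = 0 := by
    ext1 N
    exact coeff_zero_of_ind h E hE0 hEX N (fun i => S (q i)) hsum i
  apply ha
  have key : ((aeval (Sum.elim 0 (fun j => a (Sum.inr j)) : P' ⊕ J → ℂ)).comp
      ((Polynomial.aeval (R := MvPolynomial (P' ⊕ J) ℂ) 1).restrictScalars ℂ)).comp S = aeval a := by
    ext1 x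
    rcases x with p | j
    · have : aeval (0 : P' → ℂ) (ρ p) = eval 0 (ρ p) := by rw [MvPolynomial.aeval_eq_eval]
      have h2 : aeval (Sum.elim 0 (fun j => a (Sum.inr j)) : P' ⊕ J → ℂ) (rename Sum.inl (ρ p)) =
          eval 0 (ρ p) := by rw [aeval_rename, Sum.elim_comp_inl, this]
      simp only [S, AlgHom.comp_apply, aeval_X, Sum.elim_inl, map_add, map_mul,
        AlgHom.restrictScalars_apply, Polynomial.aeval_C, Polynomial.aeval_X, map_one, one_mul,
        Algebra.algebraMap_self_apply, h2, aeval_C, α]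
      ring
    · simp [S]
  have := congrArg (fun φ => φ (q i)) key
  simp only [AlgHom.comp_apply, hS, map_zero] at this
  rw [← MvPolynomial.aeval_eq_eval]; exact this.symm

/-- If each linear form contains a coordinate such that these coordinates are algebraically
independent, then the general slice is nonempty: specialize the forms to these coordinates. -/
theorem sys_ind_one (ζ : ∀ j, M j → κ) (z : κ → K) (k : ∀ j, M j)
    (h : AlgebraicIndependent ℂ fun j => z (ζ j (k j))) :
    Ind (sysT ζ z) (fun k => C (z k)) (fun _ : Fin 1 => 1) := by
  classical
  refine ind_specialize (P' := Empty) (B' := K) ζ z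
    (Sum.elim Empty.elim fun j => z (ζ j (k j))) (fun p => if k p.1 = p.2 then -1 else 0) ?_ _ ?_
  · intro j
    simp [apply_ite, ite_mul]
  · intro q hq i
    have := (algebraicIndependent_equiv (R := ℂ) (Equiv.emptySum Empty J)).2 h
    rw [show (fun j => z (ζ j (k j))) ∘ (Equiv.emptySum Empty J) =
      Sum.elim (Empty.elim : Empty → K) fun j => z (ζ j (k j)) by
        ext1 x; rcases x with x | x
        · exact x.elim
        · rfl] at this
    rw [Fin.sum_univ_one] at hq
    have := (algebraicIndependent_iff.1 this) (q 0) (by simpa using hq)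
    rw [Subsingleton.elim i 0]; exact this

end SC

/-! ### Generic properties, multiprojective closures and charts -/

section Gen
open MvPolynomial

/-- Nonvanishing of a polynomial in parameters depending linearly and surjectively on `L` is an open
and dense condition on `L`. -/
theorem openDense_param {E σ : Type} [AddCommGroup E] [Module ℂ E] [TopologicalSpace E]
    [IsTopologicalAddGroup E] [ContinuousSMul ℂ E] [T2Space E] [FiniteDimensional ℂ E] [Finite σ]
    (T : E →ₗ[ℂ] (σ → ℂ)) (hT : Function.Surjective T) {g : MvPolynomial σ ℂ} (hg : g ≠ 0) :
    IsOpen {L | eval (T L) g ≠ 0} ∧ Dense {L | eval (T L) g ≠ 0} := by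
  obtain ⟨h1, h2⟩ := isOpen_dense_eval_ne_zero g hg
  exact ⟨h1.preimage T.continuous_of_finiteDimensional,
    h2.preimage (T.isOpenMap_of_finiteDimensional hT)⟩

theorem Generic.and {α : Type*} [TopologicalSpace α] {P Q : α → Prop} (hP : Generic P)
    (hQ : Generic Q) : Generic fun a => P a ∧ Q a := by
  obtain ⟨U, hU, hU', hP⟩ := hP
  obtain ⟨V, hV, hV', hQ⟩ := hQ
  exact ⟨U ∩ V, hU.inter hV, hU'.inter_of_isOpen_left hV' hU, fun a h => ⟨hP a h.1, hQ a h.2⟩⟩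

theorem Generic.mono {α : Type*} [TopologicalSpace α] {P Q : α → Prop} (hP : Generic P)
    (h : ∀ a, P a → Q a) : Generic Q := by
  obtain ⟨U, hU, hU', hP⟩ := hP
  exact ⟨U, hU, hU', fun a ha => h a (hP a ha)⟩

theorem Generic.exists {α : Type*} [TopologicalSpace α] [Nonempty α] {P : α → Prop}
    (hP : Generic P) : ∃ a, P a := by
  obtain ⟨U, hU, hU', hP⟩ := hP
  obtain ⟨a, ha⟩ := hU'.nonempty
  exact ⟨a, hP a ha⟩

theorem Generic.forall {α : Type*} [TopologicalSpace α] {β : Type*} [Finite β] {P : β → α → Prop}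
    (hP : ∀ b, Generic (P b)) : Generic fun a => ∀ b, P b a := by
  have key : ∀ s : Set β, s.Finite → Generic fun a => ∀ b ∈ s, P b a := by
    intro s hs
    induction s, hs using Set.Finite.induction_on with
    | empty => exact ⟨Set.univ, isOpen_univ, dense_univ, by simp⟩
    | @insert b0 _ _ _ ih =>
      refine (ih.and (hP b0)).mono fun a h b hb => ?_
      rcases hb with rfl | hb
      · exact h.2
      · exact h.1 b hb
  exact (key Set.univ Set.finite_univ).mono fun a h b => h b trivial

end Gen

section Pts
open MvPolynomial

variable {ι : Type} [Fintype ι] [DecidableEq ι] {n : ι → ℕ}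

/-- Vanishing at a point is tested on the multiples `t i • v i` of one system of representatives,
as `f` is not assumed multihomogeneous. -/
theorem polyVanish_iff {f : MvPolynomial ((i : ι) × Fin (n i + 1)) ℂ} {y : PStack n}
    (v : ∀ i, Fin (n i + 1) → ℂ) (hv : ∀ i, ∃ h : v i ≠ 0, Projectivization.mk ℂ (v i) h = y i) :
    PolyVanish f y ↔ ∀ t : ι → ℂ, (∀ i, t i ≠ 0) →
      eval (fun p : (i : ι) × Fin (n i + 1) => t p.1 * v p.1 p.2) f = 0 := by
  constructor
  · intro h t ht
    refine h (fun i => t i • v i) fun i => ?_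
    obtain ⟨h1, h2⟩ := hv i
    refine ⟨smul_ne_zero (ht i) h1, ?_⟩
    rw [← h2, Projectivization.mk_eq_mk_iff']
    exact ⟨t i, rfl⟩
  · intro h w hw
    have : ∀ i, ∃ t : ℂ, t ≠ 0 ∧ t • v i = w i := by
      intro i
      obtain ⟨h1, h2⟩ := hv i
      obtain ⟨h3, h4⟩ := hw i
      rw [← h2, Projectivization.mk_eq_mk_iff'] at h4
      obtain ⟨t, ht⟩ := h4
      refine ⟨t, ?_, ht⟩
      rintro rfl
      exact h3 (by simp [← ht])
    choose t ht htw using this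
    have := h t ht
    rw [← this]
    congr 2
    ext p
    rw [← htw]; rfl

/-- Membership in the closure is tested on single polynomials. -/
theorem mem_mpClosure {S : Set (PStack n)} {y : PStack n} :
    y ∈ mpClosure S ↔ ∀ f, (∀ s ∈ S, PolyVanish f s) → PolyVanish f y := by
  constructor
  · intro h f hf
    have := h {x | ∀ g ∈ ({f} : Set _), PolyVanish g x} ⟨⟨_, rfl⟩, fun s hs g hg => by
      rw [hg]; exact hf s hs⟩
    exact this f rfl
  · rintro h A ⟨⟨F, rfl⟩, hA⟩ f hf
    exact h f fun s hs => hA hs f hf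

theorem subset_mpClosure (S : Set (PStack n)) : S ⊆ mpClosure S :=
  fun _ hs => mem_mpClosure.2 fun _ hf => hf _ hs

theorem isAlgebraicSet_mpClosure (S : Set (PStack n)) : IsAlgebraicSet (mpClosure S) := by
  refine ⟨{f | ∀ s ∈ S, PolyVanish f s}, ?_⟩
  ext y
  rw [mem_mpClosure]
  rfl

theorem pLinVanish_mk {κ : Type} [Fintype κ] (c v : κ → ℂ) (hv : v ≠ 0) :
    PLinVanish c (Projectivization.mk ℂ v hv) ↔ ∑ a, c a * v a = 0 := by
  constructor
  · intro h; exact h v hv rfl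
  · intro h w hw hwv
    rw [Projectivization.mk_eq_mk_iff'] at hwv
    obtain ⟨t, rfl⟩ := hwv
    have : ∑ a, c a * (t • v) a = t * ∑ a, c a * v a := by
      rw [Finset.mul_sum]; exact Finset.sum_congr rfl fun a _ => by simp; ring
    rw [this, h, mul_zero]

/-- The affine chart of multiprojective space in which the `c i`-th coordinate of the `i`-th factor
is `1`. -/
noncomputable def ch (c : ∀ i, Fin (n i + 1)) (w : (Σ i, Fin (n i)) → ℂ) : PStack n := fun i =>
  Projectivization.mk ℂ (Fin.insertNth (α := fun _ => ℂ) (c i) 1 fun k => w ⟨i, k⟩)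
    (fun h => one_ne_zero (α := ℂ) (by simpa using congrFun h (c i)))

/-- A point whose coordinates `c i` are nonzero lies in the chart `c`. -/
theorem exists_ch {y : PStack n} {v : ∀ i, Fin (n i + 1) → ℂ}
    (hv : ∀ i, ∃ h : v i ≠ 0, Projectivization.mk ℂ (v i) h = y i) {c : ∀ i, Fin (n i + 1)}
    (hc : ∀ i, v i (c i) ≠ 0) : y = ch c fun p => v p.1 ((c p.1).succAbove p.2) / v p.1 (c p.1) := by
  funext i
  obtain ⟨h1, h2⟩ := hv i
  rw [← h2, ch, Projectivization.mk_eq_mk_iff']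
  refine ⟨v i (c i), ?_⟩
  ext k
  induction k using Fin.succAboveCases (c i) with
  | x => simp
  | p k => simp [mul_div_cancel₀ _ (hc i)]

theorem ch_injective (c : ∀ i, Fin (n i + 1)) : Function.Injective (ch c) := by
  intro w w' h
  ext ⟨i, k⟩
  have := congrFun h i
  rw [ch, ch, Projectivization.mk_eq_mk_iff'] at this
  obtain ⟨t, ht⟩ := this
  have h1 := congrFun ht (c i)
  have h2 := congrFun ht ((c i).succAbove k)
  simp at h1 h2
  simpa [h1] using h2.symm

/-- The coefficients of a multilinear slice, arranged as parameters of an affine-linear slice of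
the chart `c`. -/
def chParam {e : ι → ℕ} (c : ∀ i, Fin (n i + 1)) :
    SliceParams n e →ₗ[ℂ]
      ((Σ j : (Σ i, Fin (e i)), Fin (n j.1)) ⊕ (Σ i, Fin (e i)) → ℂ) where
  toFun L := Sum.elim (fun p => L p.1.1 p.1.2 ((c p.1.1).succAbove p.2))
    (fun j => L j.1 j.2 (c j.1))
  map_add' L L' := by ext x; rcases x with x | x <;> rfl
  map_smul' t L := by ext x; rcases x with x | x <;> rfl

theorem chParam_surjective {e : ι → ℕ} (c : ∀ i, Fin (n i + 1)) :
    Function.Surjective (chParam (e := e) c) := by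
  intro p
  refine ⟨fun i j => Fin.insertNth (α := fun _ => ℂ) (c i) (p (Sum.inr ⟨i, j⟩))
    fun k => p (Sum.inl ⟨⟨i, j⟩, k⟩), ?_⟩
  ext x
  rcases x with x | x <;> simp [chParam]

theorem ch_mem_sliceZeros {e : ι → ℕ} (c : ∀ i, Fin (n i + 1)) (w : (Σ i, Fin (n i)) → ℂ)
    (L : SliceParams n e) :
    ch c w ∈ SliceZeros L ↔
      w ∈ Slc (fun (j : Σ i, Fin (e i)) (k : Fin (n j.1)) => ⟨j.1, k⟩) (chParam c L) := by
  have : ∀ i j, PLinVanish (L i j) (ch c w i) ↔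
      L i j (c i) + ∑ k, L i j ((c i).succAbove k) * w ⟨i, k⟩ = 0 := by
    intro i j
    rw [ch, pLinVanish_mk, Fin.sum_univ_succAbove _ (c i)]
    simp
  constructor
  · intro h j
    exact (this j.1 j.2).1 (h j.1 j.2)
  · intro h i j
    exact (this i j).2 (h ⟨i, j⟩)

end Pts

/-! ### Closures of images of affine varieties -/

section ParSec
open MvPolynomial

variable {ι : Type} [Fintype ι] [DecidableEq ι] {n : ι → ℕ} {κ K : Type} [Field K] [Algebra ℂ K]

/-- A morphism `Φ` from affine space to multiprojective space, given by polynomials `pol`. A fixed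
linear form `lam i` is `1` on the representatives in the `i`-th factor, so that `Φ` maps into the
complement of a hyperplane in each factor. -/
structure Par (n : ι → ℕ) (κ : Type) where
  pol : ∀ i, Fin (n i + 1) → MvPolynomial κ ℂ
  lam : ∀ i, Fin (n i + 1) → ℂ
  Φ : (κ → ℂ) → PStack n
  hlam : ∀ i, ∑ k, C (lam i k) * pol i k = 1
  hΦ : ∀ y i, ∃ h : (fun k => eval y (pol i k)) ≠ 0, Projectivization.mk ℂ _ h = Φ y i

namespace Par

variable (A : Par n κ) (z : κ → K)

/-- The homogeneous coordinates of the image of the generic point `z`. -/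
noncomputable def x (i : ι) (k : Fin (n i + 1)) : K := aeval z (A.pol i k)

/-- The coordinates of the image of the generic point in the chart `c`. They are meaningful only if
the homogeneous coordinates `c i` of that image are nonzero. -/
noncomputable def wbar (c : ∀ i, Fin (n i + 1)) (p : Σ i, Fin (n i)) : K :=
  A.x z p.1 ((c p.1).succAbove p.2) / A.x z p.1 (c p.1)

theorem sum_lam (i : ι) : ∑ k, algebraMap ℂ K (A.lam i k) * A.x z i k = 1 := by
  have := congrArg (aeval z) (A.hlam i)
  simpa [x] using this

theorem exists_x_ne (i : ι) : ∃ k, A.x z i k ≠ 0 := by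
  by_contra! h
  have := A.sum_lam z i
  simp [h] at this

/-- Some chart contains the image of the generic point. -/
theorem exists_valid : ∃ c : ∀ i, Fin (n i + 1), ∀ i, A.x z i (c i) ≠ 0 := by
  choose c hc using A.exists_x_ne z
  exact ⟨c, hc⟩

theorem ch_rep (c : ∀ i, Fin (n i + 1)) (w : (Σ i, Fin (n i)) → ℂ) (i : ι) :
    ∃ h : (Fin.insertNth (α := fun _ => ℂ) (c i) 1 fun k => w ⟨i, k⟩ : Fin (n i + 1) → ℂ) ≠ 0,
      Projectivization.mk ℂ _ h = ch c w i := ⟨_, rfl⟩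

/-- The chart coordinates acquire the common denominator `∏ i, X ⟨i, c i⟩`. -/
theorem eval_homog {𝒜 : Type} [CommRing 𝒜] [Algebra ℂ 𝒜] (E : Type) [Field E] [Algebra ℂ E]
    (χ : MvPolynomial ((i : ι) × Fin (n i + 1)) ℂ →ₐ[ℂ] E) (c : ∀ i, Fin (n i + 1))
    (hc : ∀ i, χ (X ⟨i, c i⟩) ≠ 0) (p : Σ i, Fin (n i)) :
    χ (∏ i, X ⟨i, c i⟩) * (χ (X ⟨p.1, (c p.1).succAbove p.2⟩) / χ (X ⟨p.1, c p.1⟩)) =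
      χ (X ⟨p.1, (c p.1).succAbove p.2⟩ * ∏ i ∈ Finset.univ.erase p.1, X ⟨i, c i⟩) := by
  rw [← Finset.mul_prod_erase _ _ (Finset.mem_univ p.1), map_mul, map_mul]
  field_simp [hc p.1]

/-- A polynomial vanishing at all multiples of the generic point vanishes on the image. -/
theorem polyVanish_of_aeval (f : MvPolynomial ((i : ι) × Fin (n i + 1)) ℂ)
    (hf : ∀ t : ι → ℂ, (∀ i, t i ≠ 0) →
      aeval (fun p : (i : ι) × Fin (n i + 1) => algebraMap ℂ K (t p.1) * A.x z p.1 p.2) f = 0) :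
    ∀ s ∈ A.Φ '' VZ z, PolyVanish f s := by
  rintro _ ⟨s, hs, rfl⟩
  rw [polyVanish_iff _ (A.hΦ s)]
  intro t ht
  have := hs (aeval (fun p : (i : ι) × Fin (n i + 1) => C (t p.1) * A.pol p.1 p.2) f) (by
    rw [← hf t ht, ← AlgHom.comp_apply, comp_aeval]
    congr 2
    ext p
    simp [x])
  rw [← MvPolynomial.aeval_eq_eval, ← AlgHom.comp_apply, comp_aeval] at this
  rw [← this, MvPolynomial.aeval_eq_eval]
  congr 2
  ext p
  simp [MvPolynomial.aeval_eq_eval]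

/-- In a chart containing the generic point, the chart coordinates of a point of the closure satisfy
all relations of `wbar`. -/
theorem mem_VZ_of_ch_mem {c : ∀ i, Fin (n i + 1)} (hc : ∀ i, A.x z i (c i) ≠ 0)
    {v : ∀ i, Fin (n i + 1) → ℂ} {y : PStack n}
    (hv : ∀ i, ∃ h : v i ≠ 0, Projectivization.mk ℂ (v i) h = y i)
    (hvc : ∀ i, v i (c i) ≠ 0) (hy : y ∈ mpClosure (A.Φ '' VZ z)) :
    (fun p : Σ i, Fin (n i) => v p.1 ((c p.1).succAbove p.2) / v p.1 (c p.1)) ∈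
      VZ (A.wbar z c) := by
  intro f hf
  obtain ⟨N, F, hF⟩ := exists_homogenization f
    (∏ i, X ⟨i, c i⟩ : MvPolynomial ((i : ι) × Fin (n i + 1)) ℂ)
    (fun p : Σ i, Fin (n i) =>
      X ⟨p.1, (c p.1).succAbove p.2⟩ * ∏ i ∈ Finset.univ.erase p.1, X ⟨i, c i⟩)
  have hFy : PolyVanish F y := by
    refine mem_mpClosure.1 hy F (A.polyVanish_of_aeval z F fun t ht => ?_)
    have ht' : ∀ i, algebraMap ℂ K (t i) ≠ 0 := fun i =>
      (map_ne_zero_iff _ (algebraMap ℂ K).injective).2 (ht i)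
    rw [hF K (aeval _) (A.wbar z c), hf, mul_zero]
    intro p
    rw [← eval_homog (𝒜 := ℂ)]
    · congr 1
      simp only [aeval_X, wbar]
      rw [mul_div_mul_left _ _ (ht' _)]
    · intro i
      simpa using ⟨ht i, hc i⟩
  have h1 := (polyVanish_iff v hv).1 hFy 1 (by simp)
  rw [← MvPolynomial.aeval_eq_eval, hF ℂ (aeval _) (fun p => v p.1 ((c p.1).succAbove p.2) / v p.1 (c p.1)),
    mul_eq_zero] at h1
  · rw [← MvPolynomial.aeval_eq_eval]
    refine h1.resolve_left (pow_ne_zero _ ?_)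
    rw [map_prod]
    exact Finset.prod_ne_zero_iff.2 fun i _ => by simpa using hvc i
  · intro p
    rw [← eval_homog (𝒜 := ℂ)]
    · simp
    · intro i; simpa using hvc i

/-- Conversely, a point of a chart satisfying all relations of `wbar` lies in the closure. -/
theorem ch_mem {c : ∀ i, Fin (n i + 1)} (hc : ∀ i, A.x z i (c i) ≠ 0)
    (hgen : ∀ f : MvPolynomial κ ℂ, (∀ y ∈ VZ z, eval y f = 0) → aeval z f = 0)
    {w : (Σ i, Fin (n i)) → ℂ} (hw : w ∈ VZ (A.wbar z c)) :
    ch c w ∈ mpClosure (A.Φ '' VZ z) := by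
  rw [mem_mpClosure]
  intro f hf
  rw [polyVanish_iff _ (ch_rep c w)]
  intro t ht
  let q : (i : ι) × Fin (n i + 1) → MvPolynomial (Σ i, Fin (n i)) ℂ := fun p =>
    C (t p.1) * Fin.insertNth (α := fun _ => MvPolynomial (Σ i, Fin (n i)) ℂ) (c p.1) 1
      (fun k => X ⟨p.1, k⟩) p.2
  have hq : ∀ {E : Type} [Field E] [Algebra ℂ E] (x : ∀ i, Fin (n i + 1) → E)
      (hx : ∀ i, x i (c i) ≠ 0),
      aeval (fun p : Σ i, Fin (n i) => x p.1 ((c p.1).succAbove p.2) / x p.1 (c p.1)) (aeval q f) =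
      aeval (fun p : (i : ι) × Fin (n i + 1) =>
        algebraMap ℂ E (t p.1) * (x p.1 p.2 / x p.1 (c p.1))) f := by
    intro E _ _ x hx
    rw [← AlgHom.comp_apply, comp_aeval]
    congr 2
    ext ⟨i, k⟩
    simp only [q, map_mul, algHom_C]
    congr 1
    induction k using Fin.succAboveCases (c i) with
    | x => simp [hx i]
    | p k => simp
  have h0 : aeval (A.wbar z c) (aeval q f) = 0 := by
    obtain ⟨N, F, hF⟩ := exists_homogenization (aeval q f)
      (∏ i, X ⟨i, c i⟩ : MvPolynomial ((i : ι) × Fin (n i + 1)) ℂ)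
      (fun p : Σ i, Fin (n i) =>
        X ⟨p.1, (c p.1).succAbove p.2⟩ * ∏ i ∈ Finset.univ.erase p.1, X ⟨i, c i⟩)
    have h1 : aeval z (aeval (fun p : (i : ι) × Fin (n i + 1) => A.pol p.1 p.2)
        (F * ∏ i, X ⟨i, c i⟩)) = 0 := by
      apply hgen
      intro s hs
      rw [← MvPolynomial.aeval_eq_eval, ← AlgHom.comp_apply, comp_aeval, map_mul]
      by_cases hd : ∀ i, eval s (A.pol i (c i)) = 0 → False
      · rw [hF ℂ (aeval _) (fun p => eval s (A.pol p.1 ((c p.1).succAbove p.2)) /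
          eval s (A.pol p.1 (c p.1)))]
        · rw [hq (fun i k => eval s (A.pol i k)) hd]
          have := (polyVanish_iff _ (A.hΦ s)).1 (hf _ ⟨s, hs, rfl⟩)
            (fun i => t i / eval s (A.pol i (c i))) fun i => div_ne_zero (ht i) (hd i)
          rw [← MvPolynomial.aeval_eq_eval] at this
          have h2 : (fun p : (i : ι) × Fin (n i + 1) => t p.1 / eval s (A.pol p.1 (c p.1)) *
              eval s (A.pol p.1 p.2)) = fun p => algebraMap ℂ ℂ (t p.1) *
              (eval s (A.pol p.1 p.2) / eval s (A.pol p.1 (c p.1))) := by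
            ext p; rw [Algebra.algebraMap_self_apply]; ring
          rw [h2] at this
          rw [this, mul_zero, zero_mul]
        · intro p
          rw [← eval_homog (𝒜 := ℂ)]
          · simp [MvPolynomial.aeval_eq_eval]
          · intro i; simpa [MvPolynomial.aeval_eq_eval] using hd i
      · push Not at hd
        obtain ⟨i, hi, -⟩ := hd
        rw [map_prod, Finset.prod_eq_zero (Finset.mem_univ i), mul_zero]
        simp [MvPolynomial.aeval_eq_eval, hi]
    rw [← AlgHom.comp_apply, comp_aeval, map_mul, mul_eq_zero, map_prod,
      hF K (aeval _) (A.wbar z c), mul_eq_zero, or_assoc] at h1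
    · have h3 : ∏ i, aeval (fun p : (i : ι) × Fin (n i + 1) => aeval z (A.pol p.1 p.2))
        (X (R := ℂ) ⟨i, c i⟩) ≠ 0 := Finset.prod_ne_zero_iff.2 fun i _ => by simpa [x] using hc i
      rcases h1 with h1 | h1 | h1
      · rw [map_prod] at h1
        exact (pow_ne_zero N h3 h1).elim
      · exact h1
      · exact (h3 h1).elim
    · intro p
      rw [← eval_homog (𝒜 := ℂ)]
      · simp [wbar, x]
      · intro i; simpa [x] using hc i
  have := hw _ h0
  rw [← MvPolynomial.aeval_eq_eval, ← AlgHom.comp_apply, comp_aeval] at this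
  rw [← this, MvPolynomial.aeval_eq_eval]
  congr 2
  ext ⟨i, k⟩
  simp only [q, map_mul, algHom_C]
  congr 1
  induction k using Fin.succAboveCases (c i) with
  | x => simp
  | p k => simp

/-- Every point of the closure lies in a chart that contains the generic point, since a homogeneous
coordinate vanishing at the generic point vanishes on the whole closure. -/
theorem exists_ch_of_mem {y : PStack n} (hy : y ∈ mpClosure (A.Φ '' VZ z)) :
    ∃ c w, (∀ i, A.x z i (c i) ≠ 0) ∧ w ∈ VZ (A.wbar z c) ∧ y = ch c w := by
  have hrep : ∀ i, ∃ v : Fin (n i + 1) → ℂ, ∃ h : v ≠ 0, Projectivization.mk ℂ v h = y i :=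
    fun i => ⟨(y i).rep, (y i).rep_nonzero, (y i).mk_rep⟩
  choose v hv using hrep
  have : ∀ i, ∃ k, v i k ≠ 0 := fun i => Function.ne_iff.1 (hv i).1
  choose c hvc using this
  have hc : ∀ i, A.x z i (c i) ≠ 0 := by
    intro i hi
    have : PolyVanish (X ⟨i, c i⟩) y := by
      refine mem_mpClosure.1 hy _ (A.polyVanish_of_aeval z _ fun t ht => ?_)
      simp [hi]
    have := (polyVanish_iff v hv).1 this 1 (by simp)
    exact hvc i (by simpa using this)
  exact ⟨c, _, hc, A.mem_VZ_of_ch_mem z hc hv hvc hy, exists_ch hv hvc⟩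

/-- In a chart containing the generic point, the closure is the variety with generic point `wbar`. -/
theorem ch_mem_iff {c : ∀ i, Fin (n i + 1)} (hc : ∀ i, A.x z i (c i) ≠ 0)
    (hgen : ∀ f : MvPolynomial κ ℂ, (∀ y ∈ VZ z, eval y f = 0) → aeval z f = 0)
    {w : (Σ i, Fin (n i)) → ℂ} :
    ch c w ∈ mpClosure (A.Φ '' VZ z) ↔ w ∈ VZ (A.wbar z c) := by
  refine ⟨fun h => ?_, A.ch_mem z hc hgen⟩
  have := A.mem_VZ_of_ch_mem z hc
    (ch_rep c w) (by simp) h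
  simpa using this

end Par
end ParSec

/-! ### General multilinear slices of a closure -/

section ParSec
open MvPolynomial

variable {ι : Type} [Fintype ι] [DecidableEq ι] {n : ι → ℕ} {κ K : Type} [Field K] [Algebra ℂ K]

/-- The variables in the equations of a multilinear slice in a chart: a linear form on the `i`-th
factor involves the coordinates of that factor only. -/
def chIdx (n e : ι → ℕ) (j : Σ i, Fin (e i)) (k : Fin (n j.1)) : Σ i, Fin (n i) := ⟨j.1, k⟩

/-- A nonzero polynomial in the chart coefficients of a slice is generically nonzero. -/
theorem generic_of_poly {e : ι → ℕ} (c : ∀ i, Fin (n i + 1))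
    {g : MvPolynomial ((Σ j : (Σ i, Fin (e i)), Fin (n j.1)) ⊕ (Σ i, Fin (e i))) ℂ} (hg : g ≠ 0) :
    Generic fun L : SliceParams n e => eval (chParam c L) g ≠ 0 :=
  let h := openDense_param (chParam (e := e) c) (chParam_surjective c) hg
  ⟨_, h.1, h.2, fun _ h => h⟩

namespace Par

variable (A : Par n κ) (z : κ → K)

/-- Chart coordinates generate the same field as homogeneous ones up to algebraic extension. The
normalization `lam` recovers the inverse of the coordinate divided by. -/
theorem wbar_alg (hK : Algebra.IsAlgebraic (Algebra.adjoin ℂ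
      (Set.range fun p : (i : ι) × Fin (n i + 1) => A.x z p.1 p.2)) K)
    {c : ∀ i, Fin (n i + 1)} (hc : ∀ i, A.x z i (c i) ≠ 0) :
    Algebra.IsAlgebraic (Algebra.adjoin ℂ (Set.range (A.wbar z c))) K := by
  suffices ∀ a ∈ Set.range fun p : (i : ι) × Fin (n i + 1) => A.x z p.1 p.2,
      IsAlgebraic (Algebra.adjoin ℂ (Set.range (A.wbar z c))) a from
    ⟨fun a => (hK.isAlgebraic a).adjoin_of_forall_isAlgebraic fun x hx => this x hx.1⟩
  set B := Algebra.adjoin ℂ (Set.range (A.wbar z c))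
  have h1 : ∀ i k, A.x z i k / A.x z i (c i) ∈ B := by
    intro i k
    induction k using Fin.succAboveCases (c i) with
    | x => rw [div_self (hc i)]; exact B.one_mem
    | p k => exact Algebra.subset_adjoin ⟨⟨i, k⟩, rfl⟩
  have h2 : ∀ i, (A.x z i (c i))⁻¹ ∈ B := by
    intro i
    have : (A.x z i (c i))⁻¹ = ∑ k, algebraMap ℂ K (A.lam i k) * (A.x z i k / A.x z i (c i)) := by
      simp_rw [← mul_div_assoc]
      rw [← Finset.sum_div, A.sum_lam, one_div]
    rw [this]
    exact B.sum_mem fun k _ => B.mul_mem (B.algebraMap_mem _) (h1 i k)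
  rintro _ ⟨⟨i, k⟩, rfl⟩
  have h3 : IsAlgebraic B (A.x z i (c i)) := by
    rw [← inv_inv (A.x z i (c i))]
    exact IsAlgebraic.inv (isAlgebraic_algebraMap (⟨_, h2 i⟩ : B))
  have h4 := (isAlgebraic_algebraMap (A := K) (⟨_, h1 i k⟩ : B)).mul h3
  have : (algebraMap B K ⟨_, h1 i k⟩) * A.x z i (c i) = A.x z i k := div_mul_cancel₀ _ (hc i)
  rwa [this] at h4

variable {r : ℕ} (hr : Algebra.trdeg ℂ K = r)
include hr

/-- A general slice of complementary dimension meets the closure only inside the chart `c₀`: in every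
other chart, the complement of `c₀` is a proper hypersurface, which the slice avoids. -/
theorem generic_chart {e : ι → ℕ} (he : ∑ i, e i = r)
    (hgen : ∀ f : MvPolynomial κ ℂ, (∀ y ∈ VZ z, eval y f = 0) → aeval z f = 0)
    {c₀ : ∀ i, Fin (n i + 1)} (hc₀ : ∀ i, A.x z i (c₀ i) ≠ 0) :
    Generic fun L : SliceParams n e => mpClosure (A.Φ '' VZ z) ∩ SliceZeros L =
      ch c₀ '' (VZ (A.wbar z c₀) ∩ Slc (chIdx n e) (chParam c₀ L)) := by
  -- in the chart `c`, the locus `f c = 0` is the complement of the chart `c₀`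
  let f : (∀ i, Fin (n i + 1)) → MvPolynomial (Σ i, Fin (n i)) ℂ := fun c =>
    ∏ i, Fin.insertNth (α := fun _ => MvPolynomial (Σ i, Fin (n i)) ℂ) (c i) 1
      (fun k => X ⟨i, k⟩) (c₀ i)
  have key : ∀ c : ∀ i, Fin (n i + 1), Generic fun L : SliceParams n e =>
      (∀ i, A.x z i (c i) ≠ 0) → ∀ w ∈ VZ (A.wbar z c) ∩ Slc (chIdx n e) (chParam c L),
        eval w (f c) ≠ 0 := by
    intro c
    by_cases hc : ∀ i, A.x z i (c i) ≠ 0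
    · obtain ⟨g, hg, hg'⟩ := sys_avoid (chIdx n e) (A.wbar z c) hr (by simp [he]) (f c) (by
        rw [map_prod]
        refine Finset.prod_ne_zero_iff.2 fun i _ => ?_
        have : aeval (A.wbar z c) (Fin.insertNth (α := fun _ => MvPolynomial (Σ i, Fin (n i)) ℂ)
          (c i) 1 (fun k => X ⟨i, k⟩) (c₀ i)) = A.x z i (c₀ i) / A.x z i (c i) := by
          generalize c₀ i = k
          induction k using Fin.succAboveCases (c i) with
          | x => simp [hc i]
          | p k => simp [wbar]
        rw [this]
        exact div_ne_zero (hc₀ i) (hc i))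
      exact (generic_of_poly c hg).mono fun L hL _ => hg' _ hL
    · exact ⟨Set.univ, isOpen_univ, dense_univ, fun _ _ h => (hc h).elim⟩
  refine (Generic.forall key).mono fun L hL => ?_
  ext y
  constructor
  · rintro ⟨hy, hyL⟩
    obtain ⟨c, w, hc, hw, rfl⟩ := A.exists_ch_of_mem z hy
    have h1 := hL c hc w ⟨hw, (ch_mem_sliceZeros c w L).1 hyL⟩
    rw [map_prod] at h1
    have h2 : ∀ i, (Fin.insertNth (α := fun _ => ℂ) (c i) 1 fun k => w ⟨i, k⟩ : Fin (n i + 1) → ℂ)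
        (c₀ i) ≠ 0 := by
      intro i
      have h3 := Finset.prod_ne_zero_iff.1 h1 i (Finset.mem_univ i)
      intro h4
      apply h3
      rw [← h4]
      generalize c₀ i = k
      induction k using Fin.succAboveCases (c i) with
      | x => simp
      | p k => simp
    have h5 := exists_ch (ch_rep c w) h2
    rw [h5] at hy hyL ⊢
    exact ⟨_, ⟨(A.ch_mem_iff z hc₀ hgen).1 hy, (ch_mem_sliceZeros c₀ _ L).1 hyL⟩, rfl⟩
  · rintro ⟨w, ⟨hw, hwL⟩, rfl⟩
    exact ⟨A.ch_mem z hc₀ hgen hw, (ch_mem_sliceZeros c₀ _ L).2 hwL⟩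

/-- A multidegree `δ` yields `δ` polynomials in the chart coordinates that are independent over the
slice parameters. -/
theorem exists_ind {e : ι → ℕ} (he : ∑ i, e i = r)
    (hgen : ∀ f : MvPolynomial κ ℂ, (∀ y ∈ VZ z, eval y f = 0) → aeval z f = 0)
    {c : ∀ i, Fin (n i + 1)} (hc : ∀ i, A.x z i (c i) ≠ 0) {δ : ℕ}
    (hδ : DegIs (mpClosure (A.Φ '' VZ z)) e δ) :
    ∃ Θ : Fin δ → MvPolynomial (Σ i, Fin (n i)) ℂ,
      Ind (sysT (chIdx n e) (A.wbar z c)) (fun k => C (A.wbar z c k)) Θ := by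
  obtain ⟨D, h1, -, g, hg, hg'⟩ := sys_det (chIdx n e) (A.wbar z c) hr (by simp [he])
  obtain ⟨L, ⟨hL1, hL2⟩, hL3⟩ :=
    ((Generic.and hδ (A.generic_chart z hr he hgen hc)).and (generic_of_poly c hg)).exists
  rw [hL2, Set.ncard_image_of_injective _ (ch_injective c), (hg' _ hL3).2] at hL1
  rw [← hL1.2]; exact h1

/-- Slices with too few or too many equations meet the closure in infinitely many points or not at
all in each chart, so the total degree of a vector in the multidimension is the transcendence degree. -/
theorem sum_eq_of_mem_MDim
    (hgen : ∀ f : MvPolynomial κ ℂ, (∀ y ∈ VZ z, eval y f = 0) → aeval z f = 0)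
    (hK : Algebra.IsAlgebraic (Algebra.adjoin ℂ
      (Set.range fun p : (i : ι) × Fin (n i + 1) => A.x z p.1 p.2)) K)
    {e : ι → ℕ} (he : e ∈ MDim (mpClosure (A.Φ '' VZ z))) : ∑ i, e i = r := by
  by_contra hne
  have key : ∀ c : ∀ i, Fin (n i + 1), Generic fun L : SliceParams n e =>
      (∀ i, A.x z i (c i) ≠ 0) → (VZ (A.wbar z c) ∩ Slc (chIdx n e) (chParam c L) = ∅ ∨
        (VZ (A.wbar z c) ∩ Slc (chIdx n e) (chParam c L)).Infinite) := by
    intro c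
    by_cases hc : ∀ i, A.x z i (c i) ≠ 0
    · rcases lt_or_gt_of_ne hne with h | h
      · obtain ⟨g, hg, hg'⟩ := sys_underdet (chIdx n e) (A.wbar z c) hr (A.wbar_alg z hK hc)
          (by simpa using h)
        refine (generic_of_poly c hg).mono fun L hL _ => ?_
        exact hg'.imp (fun h => h _ hL) (fun h => h _ hL)
      · obtain ⟨g, hg, hg'⟩ := sys_overdet (chIdx n e) (A.wbar z c) hr (by simpa using h)
        exact (generic_of_poly c hg).mono fun L hL _ => Or.inl (hg' _ hL)
    · exact ⟨Set.univ, isOpen_univ, dense_univ, fun _ _ h => (hc h).elim⟩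
  obtain ⟨L, hL, hfin, y, hy, hyL⟩ := ((Generic.forall key).and he.2).exists
  obtain ⟨c, w, hc, hw, rfl⟩ := A.exists_ch_of_mem z hy
  rcases hL c hc with h | h
  · have : w ∈ VZ (A.wbar z c) ∩ Slc (chIdx n e) (chParam c L) :=
      ⟨hw, (ch_mem_sliceZeros c w L).1 hyL⟩
    rw [h] at this
    exact this
  · refine h.image (ch_injective c).injOn (hfin.subset ?_)
    rintro _ ⟨w, ⟨hw, hwL⟩, rfl⟩
    exact ⟨A.ch_mem z hc hgen hw, (ch_mem_sliceZeros c _ L).2 hwL⟩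

/-- The multidimension is nonempty: take a transcendence basis among the chart coordinates, and let
`e i` be the number of its members in the `i`-th factor. -/
theorem exists_mem_MDim
    (hgen : ∀ f : MvPolynomial κ ℂ, (∀ y ∈ VZ z, eval y f = 0) → aeval z f = 0)
    (hK : Algebra.IsAlgebraic (Algebra.adjoin ℂ
      (Set.range fun p : (i : ι) × Fin (n i + 1) => A.x z p.1 p.2)) K) :
    ∃ e ∈ MDim (mpClosure (A.Φ '' VZ z)), ∑ i, e i = r := by
  classical
  obtain ⟨c, hc⟩ := A.exists_valid z
  have halg := A.wbar_alg z hK hc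
  obtain ⟨u, -, hu2, hu⟩ := exists_isTranscendenceBasis_between (R := ℂ) ∅ _
    (Set.empty_subset (Set.range (A.wbar z c)))
    ((algebraicIndependent_empty_iff ..).mpr <| FaithfulSMul.algebraMap_injective ℂ K)
  have hT : ∀ x : u, ∃ p, A.wbar z c p = x := fun x => hu2 x.2
  choose T hT using hT
  -- `e i` counts, and `k` enumerates, the basis coordinates in the `i`-th factor
  let e : ι → ℕ := fun i => Fintype.card {k : Fin (n i) // (⟨i, k⟩ : Σ i, Fin (n i)) ∈ Set.range T}
  let k : ∀ j : Σ i, Fin (e i), {k : Fin (n j.1) // (⟨j.1, k⟩ : Σ i, Fin (n i)) ∈ Set.range T} :=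
    fun j => (Fintype.equivFin _).symm j.2
  choose g hg using fun j => (k j).2
  have hwg : ∀ j : Σ i, Fin (e i), A.wbar z c (chIdx n e j (k j).1) = g j := by
    intro j
    rw [← hT, hg]; rfl
  have hginj : Function.Injective g := by
    rintro ⟨i, j⟩ ⟨i', j'⟩ h
    have h1 := congrArg T h
    rw [hg, hg] at h1
    obtain rfl : i = i' := congrArg Sigma.fst h1
    have h2 := eq_of_heq (Sigma.mk.inj h1).2
    have h3 := (Fintype.equivFin _).symm.injective (Subtype.ext h2)
    exact congrArg (Sigma.mk i) h3
  have hgsurj : Function.Surjective g := by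
    intro x
    refine ⟨⟨(T x).1, Fintype.equivFin _ ⟨(T x).2, x, rfl⟩⟩, ?_⟩
    have hTi : Function.Injective T := fun a b hab => Subtype.ext (by rw [← hT, ← hT, hab])
    apply hTi
    rw [hg]
    simp [k]
  have he : ∑ i, e i = r := by
    have h1 := hu.cardinalMk_eq_trdeg
    rw [← Cardinal.mk_congr (Equiv.ofBijective g ⟨hginj, hgsurj⟩), hr, Cardinal.mk_fintype,
      Nat.cast_inj] at h1
    simpa using h1
  have hind : AlgebraicIndependent ℂ fun j : Σ i, Fin (e i) =>
      A.wbar z c (chIdx n e j (k j).1) := by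
    simp_rw [hwg]
    exact hu.1.comp g hginj
  obtain ⟨D, -, hD, f, hf, hfib⟩ := sys_det (chIdx n e) (A.wbar z c) hr (by simp [he])
  have hD1 := hD _ _ (sys_ind_one (chIdx n e) (A.wbar z c) (fun j => (k j).1) hind)
  refine ⟨e, ⟨fun i => ?_, ?_⟩, he⟩
  · exact (Fintype.card_subtype_le _).trans (by simp)
  · refine ((A.generic_chart z hr he hgen hc).and (generic_of_poly c hf)).mono ?_
    rintro L ⟨hL1, hL2⟩
    obtain ⟨h1, h2⟩ := hfib _ hL2
    rw [hL1]
    refine ⟨h1.image _, Set.Nonempty.image _ ?_⟩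
    rw [Set.nonempty_iff_ne_empty]
    intro h0
    rw [h0, Set.ncard_empty] at h2
    omega

/-- The dimension of the closure is the transcendence degree of the function field. -/
theorem dimOf_eq
    (hgen : ∀ f : MvPolynomial κ ℂ, (∀ y ∈ VZ z, eval y f = 0) → aeval z f = 0)
    (hK : Algebra.IsAlgebraic (Algebra.adjoin ℂ
      (Set.range fun p : (i : ι) × Fin (n i + 1) => A.x z p.1 p.2)) K) :
    dimOf (mpClosure (A.Φ '' VZ z)) = r := by
  have : {m | ∃ e ∈ MDim (mpClosure (A.Φ '' VZ z)), ∑ i, e i = m} = {r} := by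
    ext m
    constructor
    · rintro ⟨e, he, rfl⟩
      exact A.sum_eq_of_mem_MDim z hr hgen hK he
    · rintro rfl
      exact A.exists_mem_MDim z hr hgen hK
  rw [dimOf, this, csSup_singleton]

end Par
end ParSec

/-! ### Irreducibility and generic points -/

section Affine
open MvPolynomial

variable {ι : Type} [Fintype ι] [DecidableEq ι] {n : ι → ℕ} {m : ℕ}

/-- Preimages of algebraic sets under a morphism are algebraic. -/
theorem Par.affAlgebraic_preimage (A : Par n (Fin m)) {X : Set (PStack n)}
    (hX : IsAlgebraicSet X) : AffAlgebraic {y | A.Φ y ∈ X} := by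
  obtain ⟨F, rfl⟩ := hX
  refine ⟨{g | ∃ f ∈ F, ∃ t : ι → ℂ, (∀ i, t i ≠ 0) ∧
    g = aeval (fun p : (i : ι) × Fin (n i + 1) => C (t p.1) * A.pol p.1 p.2) f}, ?_⟩
  have key : ∀ (y : Fin m → ℂ) (t : ι → ℂ) (f : MvPolynomial ((i : ι) × Fin (n i + 1)) ℂ),
      eval y (aeval (fun p : (i : ι) × Fin (n i + 1) => C (t p.1) * A.pol p.1 p.2) f) =
      eval (fun p => t p.1 * eval y (A.pol p.1 p.2)) f := by
    intro y t f
    rw [← MvPolynomial.aeval_eq_eval, ← AlgHom.comp_apply, comp_aeval,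
      ← MvPolynomial.aeval_eq_eval]
    congr 2
    ext p
    simp [MvPolynomial.aeval_eq_eval]
  ext y
  constructor
  · rintro h _ ⟨f, hf, t, ht, rfl⟩
    rw [key]
    exact (polyVanish_iff _ (A.hΦ y)).1 (h f hf) t ht
  · intro h f hf
    rw [polyVanish_iff _ (A.hΦ y)]
    intro t ht
    rw [← key]
    exact h _ ⟨f, hf, t, ht, rfl⟩

/-- The closure of the image of an irreducible set is irreducible. -/
theorem Par.isIrredVariety_closure (A : Par n (Fin m)) {S : Set (Fin m → ℂ)} (hS : AffIrred S) :
    IsIrredVariety (mpClosure (A.Φ '' S)) := by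
  refine ⟨isAlgebraicSet_mpClosure _, (hS.1.image _).mono (subset_mpClosure _), ?_⟩
  intro B B' hB hB' h
  have := hS.2 _ _ (A.affAlgebraic_preimage hB) (A.affAlgebraic_preimage hB')
    (fun y hy => h (subset_mpClosure _ ⟨y, hy, rfl⟩))
  refine this.imp (fun h x hx => hx _ ⟨hB, ?_⟩) (fun h x hx => hx _ ⟨hB', ?_⟩)
  all_goals
    rintro _ ⟨y, hy, rfl⟩
    exact h hy

/-- An irreducible algebraic set is the zero locus of the relations of a generic point. -/
theorem exists_generic_point {S : Set (Fin m → ℂ)} (ha : AffAlgebraic S) (hS : AffIrred S) :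
    ∃ (K : Type) (_ : Field K) (_ : Algebra ℂ K) (z : Fin m → K), VZ z = S ∧
      (∀ f : MvPolynomial (Fin m) ℂ, (∀ y ∈ S, eval y f = 0) → aeval z f = 0) ∧
      Algebra.IsAlgebraic (Algebra.adjoin ℂ (Set.range z)) K := by
  let I : Ideal (MvPolynomial (Fin m) ℂ) :=
    { carrier := {f | ∀ y ∈ S, eval y f = 0}
      add_mem' := fun {a b} h h' y hy => by rw [map_add, h y hy, h' y hy, add_zero]
      zero_mem' := fun y _ => map_zero _
      smul_mem' := fun c a h y hy => by rw [smul_eq_mul, map_mul, h y hy, mul_zero] }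
  have hmem : ∀ f, f ∈ I ↔ ∀ y ∈ S, eval y f = 0 := fun f => Iff.rfl
  have hI : I.IsPrime := by
    refine ⟨?_, ?_⟩
    · intro h
      obtain ⟨y, hy⟩ := hS.1
      have := (hmem 1).1 (h ▸ Submodule.mem_top) y hy
      simp at this
    · intro f g hfg
      have := hS.2 {y | ∀ q ∈ ({f} : Set (MvPolynomial (Fin m) ℂ)), eval y q = 0}
        {y | ∀ q ∈ ({g} : Set (MvPolynomial (Fin m) ℂ)), eval y q = 0} ⟨_, rfl⟩ ⟨_, rfl⟩ (by
          intro y hy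
          have := (hmem _).1 hfg y hy
          rw [map_mul, mul_eq_zero] at this
          exact this.imp (fun h q hq => hq ▸ h) (fun h q hq => hq ▸ h))
      exact this.imp (fun h y hy => h hy f rfl) (fun h y hy => h hy g rfl)
  let R := MvPolynomial (Fin m) ℂ ⧸ I
  let K := FractionRing R
  have hinj : Function.Injective (algebraMap R K) := IsFractionRing.injective R K
  let z : Fin m → K := fun k => algebraMap R K (Ideal.Quotient.mk I (X k))
  have hz : ∀ f, aeval z f = algebraMap R K (Ideal.Quotient.mk I f) := by
    intro f
    have : (aeval z : MvPolynomial (Fin m) ℂ →ₐ[ℂ] K) =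
        (IsScalarTower.toAlgHom ℂ R K).comp (Ideal.Quotient.mkₐ ℂ I) := by
      ext k
      simp only [z, aeval_X]
      rfl
    rw [this]; rfl
  have hz0 : ∀ f, aeval z f = 0 ↔ f ∈ I := by
    intro f
    rw [hz, map_eq_zero_iff _ hinj, Ideal.Quotient.eq_zero_iff_mem]
  refine ⟨K, inferInstance, inferInstance, z, ?_, fun f hf => (hz0 f).2 hf, ⟨fun x => ?_⟩⟩
  · apply Set.Subset.antisymm
    · obtain ⟨F, hF⟩ := ha
      intro y hy
      rw [hF]
      intro f hf
      refine hy f ((hz0 f).2 fun s hs => ?_)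
      rw [hF] at hs
      exact hs f hf
    · intro y hy f hf
      exact (hz0 f).1 hf y hy
  · obtain ⟨a, b, -, rfl⟩ := IsFractionRing.div_surjective (A := R) x
    have key : ∀ a : R, IsAlgebraic (Algebra.adjoin ℂ (Set.range z)) (algebraMap R K a) := by
      intro a
      obtain ⟨f, rfl⟩ := Ideal.Quotient.mk_surjective a
      rw [← hz]
      have : aeval z f ∈ Algebra.adjoin ℂ (Set.range z) := by
        rw [Algebra.adjoin_range_eq_range_aeval]
        exact ⟨f, rfl⟩
      exact isAlgebraic_algebraMap (⟨_, this⟩ : Algebra.adjoin ℂ (Set.range z))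
    rw [div_eq_mul_inv]
    exact (key a).mul (key b).inv

/-- The coordinates of the generic point contain a transcendence basis. -/
theorem exists_transcendence_indices {K : Type} [Field K] [Algebra ℂ K] (z : Fin m → K)
    (hK : Algebra.IsAlgebraic (Algebra.adjoin ℂ (Set.range z)) K) :
    ∃ (r : ℕ) (k : Fin r → Fin m), Algebra.trdeg ℂ K = r ∧
      AlgebraicIndependent ℂ fun j => z (k j) := by
  obtain ⟨u, -, hu, hb⟩ := exists_isTranscendenceBasis_between (R := ℂ) ∅ (Set.range z)
    (Set.empty_subset _) ((algebraicIndependent_empty_iff ℂ K).2 (algebraMap ℂ K).injective)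
  have : Finite u := (Set.finite_range z).subset hu
  have : Fintype u := Fintype.ofFinite u
  choose k hk using fun x : u => hu x.2
  refine ⟨Fintype.card u, k ∘ (Fintype.equivFin u).symm, ?_, ?_⟩
  · rw [← hb.cardinalMk_eq_trdeg, Cardinal.mk_fintype]
  · have := hb.1.comp _ (Fintype.equivFin u).symm.injective
    convert this using 1
    ext j
    exact hk _

/-- The affine dimension is the transcendence degree. -/
theorem affDimIs_VZ {K : Type} [Field K] [Algebra ℂ K] (z : Fin m → K) {r : ℕ}
    (hr : Algebra.trdeg ℂ K = r) (k : Fin r → Fin m)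
    (hk : AlgebraicIndependent ℂ fun j => z (k j)) : AffDimIs (VZ z) r := by
  let ζ : Fin r → Fin m → Fin m := fun _ a => a
  obtain ⟨D, -, hmax, g, hg, hgD⟩ := sys_det ζ z hr (Fintype.card_fin r)
  have hD : 1 ≤ D := hmax _ _ (sys_ind_one ζ z k hk)
  let T : (Fin r → (Fin m → ℂ) × ℂ) →ₗ[ℂ] (((_ : Fin r) × Fin m) ⊕ Fin r → ℂ) :=
    { toFun := fun L => Sum.elim (fun p => (L p.1).1 p.2) (fun j => (L j).2)
      map_add' := by
        intro L L'
        ext (p | j) <;> simp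
      map_smul' := by
        intro c L
        ext (p | j) <;> simp }
  have hT : Function.Surjective T := by
    intro p
    refine ⟨fun j => (fun a => p (Sum.inl ⟨j, a⟩), p (Sum.inr j)), ?_⟩
    ext (p | j) <;> simp [T]
  obtain ⟨ho, hd⟩ := openDense_param T hT hg
  refine ⟨_, ho, hd, fun L hL => ?_⟩
  have h := hgD (T L) hL
  have heq : {x : Fin m → ℂ | ∀ j, ∑ a, (L j).1 a * x a + (L j).2 = 0} = Slc ζ (T L) := by
    ext y
    simp only [Slc, T, ζ, Set.mem_ofPred_eq, LinearMap.coe_mk, AddHom.coe_mk, Sum.elim_inl,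
      Sum.elim_inr]
    exact forall_congr' fun j => by rw [add_comm]
  change (VZ z ∩ {x : Fin m → ℂ | ∀ j, ∑ a, (L j).1 a * x a + (L j).2 = 0}).Finite ∧
    (VZ z ∩ {x : Fin m → ℂ | ∀ j, ∑ a, (L j).1 a * x a + (L j).2 = 0}).Nonempty
  rw [heq]
  refine ⟨h.1, ?_⟩
  rw [← Set.ncard_pos h.1]
  omega

end Affine

/-! ### The affine part of a projective variety -/

section Projective
open MvPolynomial

variable {m : ℕ}

/-- Coefficient vectors of the frame dual to `b`. -/
theorem exists_dual {N : ℕ} {b : Fin N → Fin N → ℂ} (hb : LinearIndependent ℂ b) :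
    ∃ M : Fin N → Fin N → ℂ, (∀ j k, ∑ a, M j a * b k a = if j = k then 1 else 0) ∧
      ∀ (v : Fin N → ℂ) (a : Fin N), ∑ j, (∑ c, M j c * v c) * b j a = v a := by
  have hu : IsUnit (Matrix.of b) := Matrix.linearIndependent_rows_iff_isUnit.1 hb
  have hd := (Matrix.isUnit_iff_isUnit_det _).1 hu
  refine ⟨(Matrix.of b)⁻¹.transpose, fun j k => ?_, fun v a => ?_⟩
  · have := congrFun (congrFun (Matrix.mul_nonsing_inv _ hd) k) j
    rw [Matrix.mul_apply, Matrix.one_apply] at this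
    simp only [eq_comm (a := j), ← this, Matrix.transpose_apply]
    exact Finset.sum_congr rfl fun a _ => mul_comm _ _
  · have : ∀ c, ∑ j, (Matrix.of b)⁻¹ c j * b j a = if c = a then 1 else 0 := fun c => by
      have := congrFun (congrFun (Matrix.nonsing_inv_mul _ hd) c) a
      rw [Matrix.mul_apply, Matrix.one_apply] at this
      exact this
    simp only [Finset.sum_mul, Matrix.transpose_apply]
    rw [Finset.sum_comm]
    calc _ = ∑ c, v c * ∑ j, (Matrix.of b)⁻¹ c j * b j a := by
          refine Finset.sum_congr rfl fun c _ => ?_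
          rw [Finset.mul_sum]
          exact Finset.sum_congr rfl fun j _ => by ring
      _ = v a := by simp [this]

variable (Λ : Fin (m + 1) → ℂ) (b : Fin (m + 1) → (Fin (m + 1) → ℂ))
  (φ : (Fin m → ℂ) → PStack (fun _ : Unit => m))

/-- The affine chart of projective space as a morphism. -/
noncomputable def unitPar (hb0 : ∑ a, Λ a * b 0 a = 1)
    (hbj : ∀ j : Fin m, ∑ a, Λ a * b j.succ a = 0)
    (hφ : ∀ z : Fin m → ℂ, ∃ h : (b 0 + ∑ j, z j • b j.succ) ≠ 0,
        φ z = fun _ => Projectivization.mk ℂ (b 0 + ∑ j, z j • b j.succ) h) :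
    Par (fun _ : Unit => m) (Fin m) where
  pol _ k := C (b 0 k) + ∑ j, X j * C (b j.succ k)
  lam _ := Λ
  Φ := φ
  hlam _ := by
    simp only [mul_add, Finset.sum_add_distrib, Finset.mul_sum]
    rw [Finset.sum_comm]
    have h1 : ∑ k, C (σ := Fin m) (Λ k) * C (b 0 k) = 1 := by
      rw [← C_1, ← hb0, map_sum]; simp
    have h2 : ∀ j : Fin m, ∑ k, C (σ := Fin m) (Λ k) * (X j * C (b j.succ k)) = 0 := fun j => by
      have : ∑ k, C (σ := Fin m) (Λ k) * C (b j.succ k) = 0 := by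
        rw [← C_0, ← hbj j, map_sum]; simp
      calc _ = X j * ∑ k, C (σ := Fin m) (Λ k) * C (b j.succ k) := by
            rw [Finset.mul_sum]
            exact Finset.sum_congr rfl fun k _ => by ring
        _ = 0 := by rw [this, mul_zero]
    simp [h1, h2]
  hΦ y _ := by
    obtain ⟨h, hy⟩ := hφ y
    have : (fun k => eval y (C (b 0 k) + ∑ j, X j * C (b j.succ k))) =
        b 0 + ∑ j, y j • b j.succ := by
      ext k
      simp
    simp only [this, hy]
    exact ⟨h, trivial⟩

variable {Λ b φ}

/-- The affine chart reaches every point off the hyperplane `Λ = 0`. -/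
theorem chart_surj (hb : LinearIndependent ℂ b) (hb0 : ∑ a, Λ a * b 0 a = 1)
    (hbj : ∀ j : Fin m, ∑ a, Λ a * b j.succ a = 0)
    (hφ : ∀ z : Fin m → ℂ, ∃ h : (b 0 + ∑ j, z j • b j.succ) ≠ 0,
        φ z = fun _ => Projectivization.mk ℂ (b 0 + ∑ j, z j • b j.succ) h)
    (y : PStack (fun _ : Unit => m)) (hy : ¬ PLinVanish Λ (y ())) : ∃ z, φ z = y := by
  obtain ⟨M, -, hM⟩ := exists_dual hb
  obtain ⟨v, hv, hvy⟩ : ∃ (v : Fin (m + 1) → ℂ) (hv : v ≠ 0), Projectivization.mk ℂ v hv = y () :=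
    ⟨(y ()).rep, (y ()).rep_nonzero, (y ()).mk_rep⟩
  rw [← hvy, pLinVanish_mk] at hy
  have hM0 : ∑ a, Λ a * v a = ∑ c, M 0 c * v c := by
    calc ∑ a, Λ a * v a = ∑ a, Λ a * ∑ j, (∑ c, M j c * v c) * b j a := by simp only [hM]
      _ = ∑ j, (∑ c, M j c * v c) * ∑ a, Λ a * b j a := by
          simp only [Finset.mul_sum]
          rw [Finset.sum_comm]
          exact Finset.sum_congr rfl fun j _ => Finset.sum_congr rfl fun a _ => by ring
      _ = _ := by
          rw [Fin.sum_univ_succ, hb0]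
          simp [hbj]
  refine ⟨fun j => (∑ c, M j.succ c * v c) / ∑ a, Λ a * v a, ?_⟩
  obtain ⟨h, hz⟩ := hφ (fun j => (∑ c, M j.succ c * v c) / ∑ a, Λ a * v a)
  rw [hz]
  funext _
  rw [← hvy, Projectivization.mk_eq_mk_iff']
  refine ⟨(∑ a, Λ a * v a)⁻¹, ?_⟩
  ext k
  have := hM v k
  rw [Fin.sum_univ_succ, ← hM0] at this
  simp only [Pi.smul_apply, smul_eq_mul, Pi.add_apply, Finset.sum_apply]
  rw [← this]
  generalize ∑ a, Λ a * v a = l at hy ⊢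
  rw [mul_add, Finset.mul_sum, inv_mul_cancel_left₀ hy]
  congr 1
  exact Finset.sum_congr rfl fun j _ => by ring

/-- An affine algebraic set is the trace of a projective algebraic set containing the
hyperplane at infinity. -/
theorem exists_proj_of_aff (hb : LinearIndependent ℂ b) (hb0 : ∑ a, Λ a * b 0 a = 1)
    (hbj : ∀ j : Fin m, ∑ a, Λ a * b j.succ a = 0)
    (hφ : ∀ z : Fin m → ℂ, ∃ h : (b 0 + ∑ j, z j • b j.succ) ≠ 0,
        φ z = fun _ => Projectivization.mk ℂ (b 0 + ∑ j, z j • b j.succ) h)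
    {A : Set (Fin m → ℂ)} (hA : AffAlgebraic A) :
    ∃ A' : Set (PStack (fun _ : Unit => m)), IsAlgebraicSet A' ∧ (∀ z, φ z ∈ A' ↔ z ∈ A) ∧
      ∀ y, PLinVanish Λ (y ()) → y ∈ A' := by
  obtain ⟨F, rfl⟩ := hA
  obtain ⟨M, hMb, -⟩ := exists_dual hb
  let V := (i : Unit) × Fin (m + 1)
  let den : MvPolynomial V ℂ := ∑ a, C (Λ a) * X ⟨(), a⟩
  let num : Fin m → MvPolynomial V ℂ := fun j => ∑ a, C (M j.succ a) * X ⟨(), a⟩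
  choose N G hG using fun f : MvPolynomial (Fin m) ℂ => exists_homogenization f den num
  refine ⟨_, ⟨{g | ∃ f ∈ F, g = G f * den}, rfl⟩, fun z => ?_, ?_⟩
  · let A := unitPar Λ b φ hb0 hbj hφ
    have hv : ∀ k, eval z (A.pol () k) = b 0 k + ∑ j, z j * b j.succ k := fun k => by
      simp [A, unitPar]
    have hden : ∀ t : ℂ, eval (fun p : V => t * eval z (A.pol p.1 p.2)) den = t := fun t => by
      have : ∑ a, Λ a * eval z (A.pol () a) = 1 := by
        have := congrArg (eval z) (A.hlam ())
        simpa [A, unitPar] using this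
      calc _ = t * ∑ a, Λ a * eval z (A.pol () a) := by
            rw [Finset.mul_sum]
            simp only [den, map_sum, map_mul, eval_C, eval_X]
            exact Finset.sum_congr rfl fun a _ => by ring
        _ = t := by rw [this, mul_one]
    have hnum : ∀ (t : ℂ) (j : Fin m),
        eval (fun p : V => t * eval z (A.pol p.1 p.2)) (num j) = t * z j := fun t j => by
      have : ∑ a, M j.succ a * eval z (A.pol () a) = z j := by
        simp only [hv, mul_add, Finset.sum_add_distrib, hMb, Finset.mul_sum]
        rw [Finset.sum_comm]
        rw [if_neg (Fin.succ_ne_zero j), zero_add]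
        calc _ = ∑ i : Fin m, z i * ∑ a, M j.succ a * b i.succ a := by
                refine Finset.sum_congr rfl fun i _ => ?_
                rw [Finset.mul_sum]
                exact Finset.sum_congr rfl fun a _ => by ring
          _ = z j := by simp [hMb]
      calc _ = t * ∑ a, M j.succ a * eval z (A.pol () a) := by
            rw [Finset.mul_sum]
            simp only [num, map_sum, map_mul, eval_C, eval_X]
            exact Finset.sum_congr rfl fun a _ => by ring
        _ = t * z j := by rw [this]
    have key : ∀ (f : MvPolynomial (Fin m) ℂ) (t : ℂ),
        eval (fun p : V => t * eval z (A.pol p.1 p.2)) (G f * den) = t ^ N f * eval z f * t := by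
      intro f t
      have := hG f ℂ (aeval fun p : V => t * eval z (A.pol p.1 p.2)) z (fun k => by
        exact (congrArg (· * z k) (hden t)).trans (hnum t k).symm)
      change eval (fun p : V => t * eval z (A.pol p.1 p.2)) (G f) =
        (eval (fun p : V => t * eval z (A.pol p.1 p.2)) den) ^ N f * eval z f at this
      rw [map_mul, this, hden]
    constructor
    · intro h f hf
      have := (polyVanish_iff _ (A.hΦ z)).1 (h _ ⟨f, hf, rfl⟩) (fun _ => 1) (fun _ => one_ne_zero)
      have h' := key f 1
      rw [one_pow, one_mul, mul_one] at h'
      rw [← h']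
      exact this
    · rintro h _ ⟨f, hf, rfl⟩
      refine (polyVanish_iff _ (A.hΦ z)).2 fun t _ => ?_
      have h' := key f (t ())
      rw [h f hf, mul_zero, zero_mul] at h'
      exact h'
  · rintro y hy _ ⟨f, hf, rfl⟩ v hv
    obtain ⟨h, h'⟩ := hv ()
    have := hy _ h h'
    rw [map_mul]
    have hd : eval (fun p : V => v p.1 p.2) den = 0 := by
      simpa [den] using this
    exact mul_eq_zero_of_right _ hd

/-- The affine part of an irreducible projective variety is irreducible and dense. -/
theorem affine_part {Y : Set (PStack (fun _ : Unit => m))} (hY : IsIrredVariety Y)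
    (hΛ : ∃ y ∈ Y, ¬ PLinVanish Λ (y ()))
    (hb : LinearIndependent ℂ b) (hb0 : ∑ a, Λ a * b 0 a = 1)
    (hbj : ∀ j : Fin m, ∑ a, Λ a * b j.succ a = 0)
    (hφ : ∀ z : Fin m → ℂ, ∃ h : (b 0 + ∑ j, z j • b j.succ) ≠ 0,
        φ z = fun _ => Projectivization.mk ℂ (b 0 + ∑ j, z j • b j.succ) h) :
    AffIrred {z | φ z ∈ Y} ∧ AffAlgebraic {z | φ z ∈ Y} ∧ mpClosure (φ '' {z | φ z ∈ Y}) = Y := by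
  obtain ⟨y, hy, hyΛ⟩ := hΛ
  have hs := chart_surj hb hb0 hbj hφ
  refine ⟨⟨?_, ?_⟩, (unitPar Λ b φ hb0 hbj hφ).affAlgebraic_preimage hY.1, ?_⟩
  · obtain ⟨z, rfl⟩ := hs y hyΛ
    exact ⟨z, hy⟩
  · intro A B hA hB h
    obtain ⟨A', hA', h1, h2⟩ := exists_proj_of_aff hb hb0 hbj hφ hA
    obtain ⟨B', hB', h3, h4⟩ := exists_proj_of_aff hb hb0 hbj hφ hB
    have := hY.2.2 A' B' hA' hB' (by
      intro y hy
      by_cases hl : PLinVanish Λ (y ())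
      · exact Or.inl (h2 y hl)
      · obtain ⟨z, rfl⟩ := hs y hl
        exact (h hy).imp (h1 z).2 (h3 z).2)
    exact this.imp (fun h z hz => (h1 z).1 (h hz)) (fun h z hz => (h3 z).1 (h hz))
  · apply Set.Subset.antisymm
    · intro x hx
      exact hx Y ⟨hY.1, by rintro _ ⟨z, hz, rfl⟩; exact hz⟩
    · rintro x hx Z ⟨hZ, hsub⟩
      obtain ⟨H, hH, h1, h2⟩ := exists_proj_of_aff hb hb0 hbj hφ (A := ∅) ⟨{1}, by simp⟩
      have := hY.2.2 Z H hZ hH (by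
        intro y hy
        by_cases hl : PLinVanish Λ (y ())
        · exact Or.inr (h2 y hl)
        · obtain ⟨z, rfl⟩ := hs y hl
          exact Or.inl (hsub ⟨z, hy, rfl⟩))
      rcases this with h | h
      · exact h hx
      · obtain ⟨z, rfl⟩ := hs y hyΛ
        exact absurd ((h1 z).1 (h hy)) (Set.notMem_empty _)

end Projective

/-! ### Comparison of the multidegrees with the degree -/

section Degree
open MvPolynomial

variable {n₁ n₂ : ℕ}

/-- The coordinates of `ℂ^{n₁+n₂}` belonging to each of the two blocks. -/
def blk : ∀ i : Bool, Fin (cond i n₂ n₁) → Fin (n₁ + n₂)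
  | false => fun k => finSumFinEquiv (Sum.inl k)
  | true => fun k => finSumFinEquiv (Sum.inr k)

theorem exists_blk (k : Fin (n₁ + n₂)) : ∃ (i : Bool) (k' : Fin (cond i n₂ n₁)), blk i k' = k := by
  obtain ⟨(k' | k'), rfl⟩ := finSumFinEquiv.surjective k
  · exact ⟨false, k', rfl⟩
  · exact ⟨true, k', rfl⟩

/-- The chart `ℂ^{n₁+n₂} → ℙ^{n₁} × ℙ^{n₂}` as a morphism. -/
noncomputable def boolPar (ψ : (Fin (n₁ + n₂) → ℂ) → PStack (fun t : Bool => cond t n₂ n₁))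
    (hψ : ∀ z : Fin (n₁ + n₂) → ℂ,
      ∃ (h₁ : (Fin.cons 1 (fun i : Fin n₁ => z (finSumFinEquiv (Sum.inl i))) :
                Fin (n₁ + 1) → ℂ) ≠ 0)
        (h₂ : (Fin.cons 1 (fun i : Fin n₂ => z (finSumFinEquiv (Sum.inr i))) :
                Fin (n₂ + 1) → ℂ) ≠ 0),
        ψ z false = Projectivization.mk ℂ
            (Fin.cons 1 (fun i : Fin n₁ => z (finSumFinEquiv (Sum.inl i)))) h₁ ∧
        ψ z true = Projectivization.mk ℂ
            (Fin.cons 1 (fun i : Fin n₂ => z (finSumFinEquiv (Sum.inr i)))) h₂) :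
    Par (fun t : Bool => cond t n₂ n₁) (Fin (n₁ + n₂)) where
  pol i := Fin.cons 1 fun k => X (blk i k)
  lam i := Fin.cons 1 0
  Φ := ψ
  hlam i := by simp [Fin.sum_univ_succ]
  hΦ y i := by
    have key : ∀ i : Bool, (fun k => eval y ((Fin.cons 1 fun k => X (blk i k) :
        Fin (cond i n₂ n₁ + 1) → MvPolynomial (Fin (n₁ + n₂)) ℂ) k)) =
        Fin.cons 1 fun k => y (blk i k) := by
      intro i
      ext k
      refine Fin.cases ?_ (fun k => ?_) k <;> simp
    obtain ⟨h₁, h₂, h₃, h₄⟩ := hψ y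
    cases i
    · have := key false
      simp only [this, h₃]
      exact ⟨h₁, rfl⟩
    · have := key true
      simp only [this, h₄]
      exact ⟨h₂, rfl⟩

theorem isAlgebraic_adjoin_of_subset {K : Type} [Field K] [Algebra ℂ K] {s t : Set K}
    (h : s ⊆ Algebra.adjoin ℂ t) (hK : Algebra.IsAlgebraic (Algebra.adjoin ℂ s) K) :
    Algebra.IsAlgebraic (Algebra.adjoin ℂ t) K :=
  ⟨fun a => IsAlgebraic.adjoin_of_forall_isAlgebraic
    (fun x hx => isAlgebraic_algebraMap (⟨x, h hx.1⟩ : Algebra.adjoin ℂ t)) (hK.1 a)⟩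

/-- A multidegree produces an independent family for general linear forms on `ℂ^{n₁+n₂}`, as forms
involving one block of variables are specializations of these. -/
theorem exists_ind_full {K : Type} [Field K] [Algebra ℂ K] {r : ℕ}
    (A : Par (fun t : Bool => cond t n₂ n₁) (Fin (n₁ + n₂)))
    (hA : ∀ i, A.pol i = Fin.cons 1 fun k => X (blk i k))
    (z : Fin (n₁ + n₂) → K) (hr : Algebra.trdeg ℂ K = r) {e : Bool → ℕ} (he : ∑ i, e i = r)
    (hgen : ∀ f : MvPolynomial (Fin (n₁ + n₂)) ℂ, (∀ y ∈ VZ z, eval y f = 0) → aeval z f = 0)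
    {δ : ℕ} (hδ : DegIs (mpClosure (A.Φ '' VZ z)) e δ) :
    ∃ Θ : Fin δ → MvPolynomial (Fin (n₁ + n₂)) ℂ,
      Ind (sysT (fun (_ : Σ i, Fin (e i)) (k : Fin (n₁ + n₂)) => k) z) (fun k => C (z k)) Θ := by
  have hx0 : ∀ i, A.x z i 0 = 1 := fun i => by simp [Par.x, hA]
  have hxs : ∀ i k, A.x z i (Fin.succ k) = z (blk i k) := fun i k => by simp [Par.x, hA]
  have hw : A.wbar z (fun _ => 0) = fun p => z (blk p.1 p.2) := by
    funext p
    simp only [Par.wbar, hx0, div_one, Fin.succAbove_zero, hxs]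
  obtain ⟨Θ, hΘ⟩ := A.exists_ind z hr he hgen (c := fun _ => 0)
    (fun i => by rw [hx0]; exact one_ne_zero) hδ
  rw [hw] at hΘ
  refine ⟨fun i => rename (fun p => blk p.1 p.2) (Θ i), ?_⟩
  refine ind_specialize _ z
    (sysT (chIdx (fun t : Bool => cond t n₂ n₁) e) fun p => z (blk p.1 p.2))
    (fun p => ∑ k', if blk p.1.1 k' = p.2 then X ⟨p.1, k'⟩ else 0) ?_ _ ?_
  · intro j
    simp only [sysT, Sum.elim_inr, Sum.elim_inl, chIdx, algebraMap_eq, map_sum, Finset.sum_mul]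
    rw [neg_inj]
    calc ∑ k : Fin (cond j.1 n₂ n₁), X ⟨j, k⟩ * C (z (blk j.1 k))
        = ∑ k' : Fin (cond j.1 n₂ n₁), ∑ k : Fin (n₁ + n₂),
            aeval (fun p => (X p : MvPolynomial (Σ j : Σ i, Fin (e i), Fin (cond j.1 n₂ n₁)) K))
              (if blk j.1 k' = k then X ⟨j, k'⟩ else
                (0 : MvPolynomial (Σ j : Σ i, Fin (e i), Fin (cond j.1 n₂ n₁)) ℂ)) *
              C (z k) := by
          refine Finset.sum_congr rfl fun k' _ => ?_
          rw [Finset.sum_eq_single (blk j.1 k')]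
          · simp
          · intro k _ hk
            rw [if_neg (Ne.symm hk), map_zero, zero_mul]
          · simp
      _ = _ := Finset.sum_comm
  · intro q hq
    refine hΘ q ?_
    simp only [aeval_rename] at hq
    exact hq

/-- The number of points of a general linear section of the affine part is at most the
degree. -/
theorem le_degree {m : ℕ} {Λ : Fin (m + 1) → ℂ} {b : Fin (m + 1) → (Fin (m + 1) → ℂ)}
    {φ : (Fin m → ℂ) → PStack (fun _ : Unit => m)}
    {Y : Set (PStack (fun _ : Unit => m))} {d e : ℕ} (hdeg : DegIs Y (fun _ => e) d)
    (hb : LinearIndependent ℂ b) (hb0 : ∑ a, Λ a * b 0 a = 1)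
    (hbj : ∀ j : Fin m, ∑ a, Λ a * b j.succ a = 0)
    (hφ : ∀ z : Fin m → ℂ, ∃ h : (b 0 + ∑ j, z j • b j.succ) ≠ 0,
        φ z = fun _ => Projectivization.mk ℂ (b 0 + ∑ j, z j • b j.succ) h)
    {J : Type} [Fintype J] (hJ : Fintype.card J = e) {D : ℕ}
    {g : MvPolynomial ((_ : J) × Fin m ⊕ J) ℂ} (hg : g ≠ 0)
    (hD : ∀ p, eval p g ≠ 0 →
      ({z | φ z ∈ Y} ∩ Slc (fun (_ : J) (k : Fin m) => k) p).ncard = D) : D ≤ d := by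
  obtain ⟨M, hMb, -⟩ := exists_dual hb
  let σ : J ≃ Fin e := Fintype.equivFinOfCardEq hJ
  let T : SliceParams (fun _ : Unit => m) (fun _ => e) →ₗ[ℂ] ((_ : J) × Fin m ⊕ J → ℂ) :=
    { toFun := fun L => Sum.elim (fun p => ∑ a, L () (σ p.1) a * b p.2.succ a)
        (fun j => ∑ a, L () (σ j) a * b 0 a)
      map_add' := by
        intro L L'
        ext (p | j) <;> simp [add_mul, Finset.sum_add_distrib]
      map_smul' := by
        intro c L
        ext (p | j) <;> simp [mul_assoc, Finset.mul_sum] }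
  have hT : Function.Surjective T := by
    intro p
    let c : Fin e → Fin (m + 1) → ℂ := fun j =>
      Fin.cons (p (Sum.inr (σ.symm j))) fun k => p (Sum.inl ⟨σ.symm j, k⟩)
    have hc : ∀ j l, ∑ a, (∑ k, c j k * M k a) * b l a = c j l := by
      intro j l
      calc _ = ∑ k, c j k * ∑ a, M k a * b l a := by
            simp only [Finset.mul_sum, Finset.sum_mul]
            rw [Finset.sum_comm]
            exact Finset.sum_congr rfl fun k _ => Finset.sum_congr rfl fun a _ => by ring
        _ = c j l := by simp [hMb]
    refine ⟨fun _ j a => ∑ k, c j k * M k a, ?_⟩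
    ext (q | j)
    · simp only [T, LinearMap.coe_mk, AddHom.coe_mk, Sum.elim_inl, hc]
      simp [c]
    · simp only [T, LinearMap.coe_mk, AddHom.coe_mk, Sum.elim_inr, hc]
      simp [c]
  have hinj : Function.Injective φ := by
    intro z z' h
    obtain ⟨h1, h2⟩ := hφ z
    obtain ⟨h1', h2'⟩ := hφ z'
    rw [h2, h2'] at h
    have h3 := congrFun h ()
    rw [Projectivization.mk_eq_mk_iff'] at h3
    obtain ⟨a, ha⟩ := h3
    have hpair : ∀ (w : Fin m → ℂ) (u : Fin (m + 1) → ℂ),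
        ∑ k, u k * (b 0 + ∑ j, w j • b j.succ) k =
          ∑ k, u k * b 0 k + ∑ j, w j * ∑ k, u k * b j.succ k := by
      intro w u
      simp only [Pi.add_apply, Finset.sum_apply, Pi.smul_apply, smul_eq_mul, mul_add,
        Finset.sum_add_distrib, Finset.mul_sum]
      congr 1
      rw [Finset.sum_comm]
      exact Finset.sum_congr rfl fun j _ => Finset.sum_congr rfl fun k _ => by ring
    have hpair' : ∀ u : Fin (m + 1) → ℂ, a * ∑ k, u k * (b 0 + ∑ j, z' j • b j.succ) k =
        ∑ k, u k * (b 0 + ∑ j, z j • b j.succ) k := by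
      intro u
      rw [← ha, Finset.mul_sum]
      exact Finset.sum_congr rfl fun k _ => by
        rw [Pi.smul_apply, smul_eq_mul]; ring
    have ha1 : a = 1 := by
      have := hpair' Λ
      rw [hpair, hpair] at this
      simpa [hb0, hbj] using this
    funext j
    have := hpair' (M j.succ)
    rw [hpair, hpair] at this
    simpa [hMb, ha1, (Fin.succ_ne_zero j)] using this.symm
  obtain ⟨ho, hd⟩ := openDense_param T hT hg
  have hG : Generic fun L : SliceParams (fun _ : Unit => m) (fun _ => e) => eval (T L) g ≠ 0 :=
    ⟨_, ho, hd, fun L h => h⟩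
  -- a slice of `Y` that is general both for `Y` and for its affine part
  obtain ⟨L, ⟨hfin, hcard⟩, hL⟩ := (hdeg.and hG).exists
  have hsub : φ '' ({z | φ z ∈ Y} ∩ Slc (fun (_ : J) (k : Fin m) => k) (T L)) ⊆
      Y ∩ SliceZeros L := by
    rintro _ ⟨z, ⟨hz, hzs⟩, rfl⟩
    refine ⟨hz, fun i j => ?_⟩
    obtain ⟨h, hzφ⟩ := hφ z
    rw [hzφ, pLinVanish_mk]
    have := hzs (σ.symm j)
    simp only [T, LinearMap.coe_mk, AddHom.coe_mk, Sum.elim_inl, Sum.elim_inr,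
      Equiv.apply_symm_apply] at this
    rw [← this]
    simp only [Pi.add_apply, Finset.sum_apply, Pi.smul_apply, smul_eq_mul, mul_add,
      Finset.sum_add_distrib, Finset.mul_sum, Finset.sum_mul]
    congr 1
    rw [Finset.sum_comm]
    exact Finset.sum_congr rfl fun j _ => Finset.sum_congr rfl fun k _ => by ring
  rw [← hcard, ← hD (T L) hL, ← Set.ncard_image_of_injective _ hinj]
  exact Set.ncard_le_ncard hsub hfin

end Degree

/-- Proposition 4.1, refining. Let `Y ⊂ ℙ^{n₁+n₂}` be irreducible of
dimension `e` and degree `d`, let `Λ` be a linear form not vanishing identically on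
`Y`, and let `Y_aff` be the corresponding affine part in the chart
`ℂ^{n₁+n₂} ≅ ℙ^{n₁+n₂} ∖ V(Λ)` (given by an affine frame `b` adapted to `Λ`).  Let
`Y_·` be the closure of `Y_aff` in `ℙ^{n₁} × ℙ^{n₂}` (via the standard multiaffine
chart `ψ`).  Then `Y_aff` and `Y_·` are irreducible of dimension `e`, and every
`(e₁,e₂)`-multidegree of `Y_·` with `e₁ + e₂ = e` is at most `d`. -/
theorem refining_multidegree_le {n₁ n₂ : ℕ}
    (Y : Set (PStack (fun _ : Unit => n₁ + n₂)))
    (hY : IsIrredVariety Y) (e d : ℕ)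
    (hdim : dimOf Y = e) (hdeg : DegIs Y (fun _ => e) d)
    (Λ : Fin (n₁ + n₂ + 1) → ℂ)
    (hΛ : ∃ y ∈ Y, ¬ PLinVanish Λ (y ()))
    (b : Fin (n₁ + n₂ + 1) → (Fin (n₁ + n₂ + 1) → ℂ))
    (hb : LinearIndependent ℂ b)
    (hb0 : ∑ a, Λ a * b 0 a = 1)
    (hbj : ∀ j : Fin (n₁ + n₂), ∑ a, Λ a * b j.succ a = 0)
    (φ : (Fin (n₁ + n₂) → ℂ) → PStack (fun _ : Unit => n₁ + n₂))
    (hφ : ∀ z : Fin (n₁ + n₂) → ℂ,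
      ∃ h : (b 0 + ∑ j, z j • b j.succ) ≠ 0,
        φ z = fun _ => Projectivization.mk ℂ (b 0 + ∑ j, z j • b j.succ) h)
    (ψ : (Fin (n₁ + n₂) → ℂ) → PStack (fun t : Bool => cond t n₂ n₁))
    (hψ : ∀ z : Fin (n₁ + n₂) → ℂ,
      ∃ (h₁ : (Fin.cons 1 (fun i : Fin n₁ => z (finSumFinEquiv (Sum.inl i))) :
                Fin (n₁ + 1) → ℂ) ≠ 0)
        (h₂ : (Fin.cons 1 (fun i : Fin n₂ => z (finSumFinEquiv (Sum.inr i))) :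
                Fin (n₂ + 1) → ℂ) ≠ 0),
        ψ z false = Projectivization.mk ℂ
            (Fin.cons 1 (fun i : Fin n₁ => z (finSumFinEquiv (Sum.inl i)))) h₁ ∧
        ψ z true = Projectivization.mk ℂ
            (Fin.cons 1 (fun i : Fin n₂ => z (finSumFinEquiv (Sum.inr i)))) h₂) :
    AffIrred {z | φ z ∈ Y} ∧ AffDimIs {z | φ z ∈ Y} e ∧
    IsIrredVariety (mpClosure (ψ '' {z | φ z ∈ Y})) ∧
    dimOf (mpClosure (ψ '' {z | φ z ∈ Y})) = e ∧
    ∀ e₁ e₂ : ℕ, e₁ + e₂ = e → ∀ δ : ℕ,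
      DegIs (mpClosure (ψ '' {z | φ z ∈ Y})) (fun t : Bool => cond t e₂ e₁) δ →
      δ ≤ d := by
  obtain ⟨hirr, halg, hcl⟩ := affine_part hY hΛ hb hb0 hbj hφ
  obtain ⟨K, _, _, z, hS, hgen, hK⟩ := exists_generic_point halg hirr
  obtain ⟨r, k, hr, hk⟩ := exists_transcendence_indices z hK
  let A := unitPar Λ b φ hb0 hbj hφ
  let B := boolPar ψ hψ
  have hgen' := hgen
  simp only [← hS] at hgen'
  have hBx : ∀ i k, B.x z i (Fin.succ k) = z (blk i k) := fun i k => by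
    simp [Par.x, B, boolPar]
  have hAK := isAlgebraic_adjoin_of_subset
    (t := Set.range fun p : (_ : Unit) × Fin (n₁ + n₂ + 1) => A.x z p.1 p.2) (by
      rintro _ ⟨j, rfl⟩
      obtain ⟨M, hMb, -⟩ := exists_dual hb
      -- the dual frame recovers the affine coordinate from the homogeneous ones
      have : z j = ∑ a, M j.succ a • A.x z () a := by
        have hx : ∀ a, A.x z () a =
            algebraMap ℂ K (b 0 a) + ∑ i, z i * algebraMap ℂ K (b i.succ a) := fun a => by
          simp [Par.x, A, unitPar]
        have h1 : ∀ i, ∑ a, algebraMap ℂ K (M j.succ a) * algebraMap ℂ K (b i a) =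
            if j.succ = i then 1 else 0 := fun i => by
          have := congrArg (algebraMap ℂ K) (hMb j.succ i)
          simpa [apply_ite (algebraMap ℂ K)] using this
        simp only [hx, Algebra.smul_def, mul_add, Finset.sum_add_distrib, h1, Finset.mul_sum]
        rw [Finset.sum_comm, if_neg (Fin.succ_ne_zero j), zero_add]
        symm
        calc _ = ∑ i, z i * ∑ a, algebraMap ℂ K (M j.succ a) * algebraMap ℂ K (b i.succ a) := by
              refine Finset.sum_congr rfl fun i _ => ?_
              rw [Finset.mul_sum]
              exact Finset.sum_congr rfl fun a _ => by ring
          _ = z j := by simp [h1]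
      rw [this]
      refine Subalgebra.sum_mem _ fun a _ => Subalgebra.smul_mem _ ?_ _
      exact Algebra.subset_adjoin ⟨⟨(), a⟩, rfl⟩) hK
  have hBK := isAlgebraic_adjoin_of_subset
    (t := Set.range fun p : (i : Bool) × Fin (cond i n₂ n₁ + 1) => B.x z p.1 p.2) (by
      rintro _ ⟨j, rfl⟩
      obtain ⟨i, j, rfl⟩ := exists_blk j
      exact Algebra.subset_adjoin ⟨⟨i, j.succ⟩, hBx i j⟩) hK
  -- `Y` is the closure of its affine part, whose dimension is `r`
  have her : r = e := by
    rw [← hdim, ← A.dimOf_eq z hr hgen' hAK, hS]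
    exact congrArg dimOf hcl
  subst her
  refine ⟨hirr, hS ▸ affDimIs_VZ z hr k hk, B.isIrredVariety_closure hirr, ?_, ?_⟩
  · rw [← hS]
    exact B.dimOf_eq z hr hgen' hBK
  · intro e₁ e₂ he δ hδ
    rw [← hS] at hδ
    have he' : ∑ i, (fun t : Bool => cond t e₂ e₁) i = r := by
      simp [← he, add_comm]
    obtain ⟨Θ, hΘ⟩ := exists_ind_full B (fun _ => rfl) z hr he' hgen' hδ
    have hJ : Fintype.card (Σ i : Bool, Fin (cond i e₂ e₁)) = r := by
      rw [Fintype.card_sigma]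
      simpa using he'
    -- `D` is the number of points of the affine part on a general linear slice: `δ ≤ D ≤ d`
    obtain ⟨D, -, hmax, g, hg, hD⟩ := sys_det
      (fun (_ : Σ i : Bool, Fin (cond i e₂ e₁)) (k : Fin (n₁ + n₂)) => k) z hr hJ
    refine (hmax _ _ hΘ).trans (le_degree hdeg hb hb0 hbj hφ hJ hg fun p hp => ?_)
    rw [← hS]
    exact (hD p hp).2

end MultiProj
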